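/- arXiv:1301.0784 — 3 statements merged into one kernel-verified Lean document; each statement's English description precedes it below -/
import Mathlib

section
/- Let G be a connected simple graph on the vertex set [n] having a vertex of degree 1, labeled n, let G′ be the graph on vertex set [n+1] obtained from G by attaching the edge {n, n+1}, and let S′ = K[x_1,…,x_{n+1},y_1,…,y_{n+1}]. Then the Hilbert series satisfy H(S′/J_{G′}, t) = (1 − t^2) · H(S′/J_G S′, t). -/
/-!
Write `J` for the extension of `J_G` to `S'`, and `f_{ij} = x_i y_j - x_j y_i`. Then
`J_{G'} = J + (F)` with `F = f_{n,n+1}` homogeneous of degree two, so by rank-nullity in each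
degree (`hseries_sup`) the claim is that `F` is a nonzerodivisor modulo `J`.

Since `J` does not involve `y_{n+1}`, and `F` is a polynomial in `y_{n+1}` with leading
coefficient `x_n`, it suffices that `x_n` is a nonzerodivisor modulo `J` (`mnr_of_mul_mem`).
Let `m` be the neighbour of the leaf `n`, and `H` the graph with `n` deleted, so that
`J = J_H + (f_{mn})`. A direct computation (`leaf_of_mul_mem`) reduces the nonzerodivisor property
of `x_n` to the statement `J_H : x_m ⊆ J_H : y_m`.

This inclusion (`colon`) holds for every graph and every vertex. It is proved for all ideals
`I(E, T) = (x_v, y_v : v ∈ T) + (f_{ij} : E i j)` at once, by induction. If `i, v, j ∉ T` with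
`E i v` and `E v j`, but not `E i j`, then `I(E, T)` is the intersection of `I(E ∪ {ij}, T)` and
`I(E, T ∪ {v})` (`mem_of_split`), and the property passes to intersections. If no such triple
exists, `E` is a disjoint union of complete graphs off `T`, and `I(E, T)` is the kernel of a
monomial map `x_i ↦ s_i a_{c(i)}`, `y_i ↦ s_i b_{c(i)}` (and `x_i, y_i ↦ 0` for `i ∈ T`), hence a
prime ideal, which contains `x_w` only if it contains `y_w` (`colon_of_cluster`).
-/

open MvPolynomial CategoryTheory Opposite

noncomputable section

namespace BEIPaper

/-- The `x_i` variable of the polynomial ring `K[x_1,…,x_n,y_1,…,y_n]`,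
which we realize as `MvPolynomial (σ ⊕ σ) K`, where `Sum.inl i ↦ x_i` and
`Sum.inr i ↦ y_i`. -/
def xv (K : Type) [Field K] {σ : Type} (i : σ) : MvPolynomial (σ ⊕ σ) K :=
  X (Sum.inl i)

/-- The `y_i` variable. -/
def yv (K : Type) [Field K] {σ : Type} (i : σ) : MvPolynomial (σ ⊕ σ) K :=
  X (Sum.inr i)

/-- The binomial edge ideal of a graph `G` on the vertex set `[n]`:
generated by the binomials `x_i y_j - x_j y_i` for edges `{i, j}` with `i < j`. -/
def bei (K : Type) [Field K] {n : ℕ} (G : SimpleGraph (Fin n)) :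
    Ideal (MvPolynomial (Fin n ⊕ Fin n) K) :=
  Ideal.span {f | ∃ i j : Fin n, i < j ∧ G.Adj i j ∧
    f = xv K i * yv K j - xv K j * yv K i}

/-- The prime ideal `P_T(G)`: generated by `{x_i, y_i : i ∈ T}` together with the
binomial edge ideals of the complete graphs on the vertex sets of the connected
components of the induced subgraph of `G` on `[n] ∖ T` (equivalently, all binomials
`x_i y_j - x_j y_i` where `i < j` lie outside `T` in the same connected component). -/
def PT (K : Type) [Field K] {n : ℕ} (G : SimpleGraph (Fin n)) (T : Set (Fin n)) :
    Ideal (MvPolynomial (Fin n ⊕ Fin n) K) :=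
  Ideal.span ((xv K '' T) ∪ (yv K '' T) ∪
    {f | ∃ i j : Fin n, ∃ (hi : i ∈ Tᶜ) (hj : j ∈ Tᶜ), i < j ∧
      (G.induce Tᶜ).Reachable ⟨i, hi⟩ ⟨j, hj⟩ ∧
      f = xv K i * yv K j - xv K j * yv K i})

/-- `c(T)`: the number of connected components of the induced subgraph of `G`
on `[n] ∖ T`. -/
def ncomp {n : ℕ} (G : SimpleGraph (Fin n)) (T : Set (Fin n)) : ℕ :=
  Nat.card (G.induce Tᶜ).ConnectedComponent

/-- The graded (irrelevant) maximal ideal of a polynomial ring, generated by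
all the variables. -/
def mIdeal (K : Type) [Field K] (σ : Type) : Ideal (MvPolynomial σ K) :=
  Ideal.span (Set.range X)

/-- The depth of a module `M` with respect to an ideal `I`: the supremum of lengths
of `M`-regular sequences consisting of elements of `I`. -/
def depth {R : Type} [CommRing R] (I : Ideal R) (M : Type) [AddCommGroup M]
    [Module R M] : ℕ∞ :=
  sSup {k : ℕ∞ | ∃ rs : List R, (rs.length : ℕ∞) = k ∧ (∀ r ∈ rs, r ∈ I) ∧
    RingTheory.Sequence.IsRegular M rs}

/-- The (Krull) dimension of a module: the Krull dimension of `R` modulo the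
annihilator of `M`. -/
def mdim (R : Type) [CommRing R] (M : Type) [AddCommGroup M] [Module R M] :
    WithBot ℕ∞ :=
  ringKrullDim (R ⧸ Module.annihilator R M)

/-- `M` is a Cohen-Macaulay `R`-module of dimension `d` (depth and dimension both
being taken with respect to the given (maximal graded) ideal `I`). -/
def IsCMmodOfDim {R : Type} [CommRing R] (I : Ideal R) (M : Type) [AddCommGroup M]
    [Module R M] (d : ℕ) : Prop :=
  (depth I M : WithBot ℕ∞) = mdim R M ∧ mdim R M = (d : ℕ∞)

/-- The quotient `S/J` of a polynomial ring `S` by an ideal `J` is a Cohen-Macaulay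
ring: its depth with respect to the graded maximal ideal equals its Krull dimension. -/
def IsCMQuot (K : Type) [Field K] {σ : Type} (J : Ideal (MvPolynomial σ K)) : Prop :=
  (depth (mIdeal K σ) (MvPolynomial σ K ⧸ J) : WithBot ℕ∞) =
    ringKrullDim (MvPolynomial σ K ⧸ J)

/-- `S/I` is approximately Cohen-Macaulay: there is a homogeneous element `x` of
positive degree in the irrelevant ideal of `R = S/I` (i.e. the image of a homogeneous
polynomial `f` of positive degree) such that `R/x^m R = S/(I + (f^m))` is a
Cohen-Macaulay ring of dimension `dim R - 1` for all `m ≥ 1`. -/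
def IsACM (K : Type) [Field K] {σ : Type} (I : Ideal (MvPolynomial σ K)) : Prop :=
  ∃ (d : ℕ) (f : MvPolynomial σ K), 0 < d ∧ f.IsHomogeneous d ∧
    ∀ m : ℕ, 1 ≤ m →
      IsCMQuot K (I ⊔ Ideal.span {f ^ m}) ∧
      ringKrullDim (MvPolynomial σ K ⧸ (I ⊔ Ideal.span {f ^ m})) + 1 =
        ringKrullDim (MvPolynomial σ K ⧸ I)

/-- The Hilbert series of `S/I` (for a homogeneous ideal `I`), as a power series
over `ℤ`: the `m`-th coefficient is the `K`-dimension of the degree-`m` graded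
component of `S/I`, i.e. of the image of the space of degree-`m` homogeneous
polynomials in `S/I`. -/
def hseries (K : Type) [Field K] {σ : Type} (I : Ideal (MvPolynomial σ K)) :
    PowerSeries ℤ :=
  PowerSeries.mk fun m =>
    (Module.finrank K (Submodule.map (Ideal.Quotient.mkₐ K I).toLinearMap
      (homogeneousSubmodule σ K m)) : ℤ)

/-- The formal power series variable `t`. -/
def t : PowerSeries ℤ := PowerSeries.X

/-- The equidimensional part `U_S(I)` of (a minimal primary decomposition of) `I`:
the intersection of the primary components `I(p)` over the associated primes `p`
with `dim S/p = dim S/I`.  Any such `p` is a minimal prime of `I`, so its primary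
component is independent of the decomposition and equals the saturation
`{x | ∃ s ∉ p, s * x ∈ I}`. -/
def USideal {R : Type} [CommRing R] (I : Ideal R) : Ideal R :=
  sInf {J | ∃ p ∈ associatedPrimes R (R ⧸ I),
    ringKrullDim (R ⧸ p) = ringKrullDim (R ⧸ I) ∧
    J = Ideal.span {x | ∃ s ∉ p, s * x ∈ I}}

/-- `Ext_S^j(S/I, S)`, as an object of `ModuleCat S`.  The `i`-th module of
deficiency of `S/I` is `ω^i(S/I) = Ext_S^{2n-i}(S/I, S)`, i.e. `extSI K I (2*n - i)`. -/
def extSI (K : Type) [Field K] {σ : Type} (I : Ideal (MvPolynomial σ K)) (j : ℕ) :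
    ModuleCat (MvPolynomial σ K) :=
  ((Ext (MvPolynomial σ K) (ModuleCat (MvPolynomial σ K)) j).obj
      (op (ModuleCat.of (MvPolynomial σ K) (MvPolynomial σ K ⧸ I)))).obj
    (ModuleCat.of (MvPolynomial σ K) (MvPolynomial σ K))

/-- The line (path) graph on `[n]` (with `[n]` realized as `Fin n`), with edges
`{i, i+1}` for `1 ≤ i ≤ n-1`. -/
def lineG (n : ℕ) : SimpleGraph (Fin n) :=
  SimpleGraph.fromRel (fun a b => (b : ℕ) = (a : ℕ) + 1)

/-- The cycle of length `n` on `[n]` (with `[n]` realized as `Fin n`), with edges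
`{i, i+1}` for `1 ≤ i ≤ n-1` together with `{1, n}`. -/
def cycleG (n : ℕ) : SimpleGraph (Fin n) :=
  SimpleGraph.fromRel (fun a b =>
    (b : ℕ) = (a : ℕ) + 1 ∨ ((a : ℕ) = 0 ∧ (b : ℕ) = n - 1))

/-- The binomial `g = x_1 y_n - x_n y_1`. -/
def gElt (K : Type) [Field K] {n : ℕ} (hn : 0 < n) : MvPolynomial (Fin n ⊕ Fin n) K :=
  xv K ⟨0, hn⟩ * yv K ⟨n - 1, by omega⟩ - xv K ⟨n - 1, by omega⟩ * yv K ⟨0, hn⟩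

/-- The `i`-th generator `x_2 x_3 ⋯ x_i y_{i+1} ⋯ y_{n-1}` (for `i = 1, …, n-1`)
of the monomial ideal `M`; the product ranges over the labels `p = 2, …, n-1`
(`0`-indexed: `q = p - 1` with `1 ≤ q ≤ n-2`), taking `x_p` when `p ≤ i` and
`y_p` when `p > i`. -/
def mgen (K : Type) [Field K] (n : ℕ) (i : ℕ) : MvPolynomial (Fin n ⊕ Fin n) K :=
  ∏ q ∈ Finset.univ.filter (fun q : Fin n => 0 < (q : ℕ) ∧ (q : ℕ) < n - 1),
    (if (q : ℕ) + 1 ≤ i then xv K q else yv K q)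

/-- The monomial ideal
`M = (x_2 x_3 ⋯ x_{n-1}, x_2 x_3 ⋯ x_{n-2} y_{n-1}, …, x_2 y_3 ⋯ y_{n-1}, y_2 y_3 ⋯ y_{n-1})`. -/
def monoM (K : Type) [Field K] (n : ℕ) : Ideal (MvPolynomial (Fin n ⊕ Fin n) K) :=
  Ideal.span {f | ∃ i : ℕ, 1 ≤ i ∧ i ≤ n - 1 ∧ f = mgen K n i}

/-- The degree of a vertex, as the cardinality of its neighbor set. -/
def deg {n : ℕ} (G : SimpleGraph (Fin n)) (v : Fin n) : ℕ :=
  Nat.card (G.neighborSet v)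

/-- A tree is 3-star like if no vertex has degree `≥ 4`, and either there is at most
one vertex of degree `3`, or there are exactly two vertices of degree `3` and they
are joined by an edge. -/
def ThreeStarLike {n : ℕ} (G : SimpleGraph (Fin n)) : Prop :=
  (∀ v, deg G v ≤ 3) ∧
    ({v | deg G v = 3}.Subsingleton ∨
      ∃ a b : Fin n, a ≠ b ∧ G.Adj a b ∧ {v | deg G v = 3} = {a, b})

/-- The graph `G′` on `[n+1]` obtained from a graph `G` on `[n]` by attaching the
new edge `{v, n+1}` at the vertex `v` of `G`. -/
def extendG {n : ℕ} (G : SimpleGraph (Fin n)) (v : Fin n) : SimpleGraph (Fin (n + 1)) :=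
  SimpleGraph.fromRel (fun a b =>
    (∃ (ha : a ≠ Fin.last n) (hb : b ≠ Fin.last n),
      G.Adj (a.castPred ha) (b.castPred hb)) ∨
    (a = Fin.castSucc v ∧ b = Fin.last n))

/-- The inclusion `S = K[x_1,…,x_n,y_1,…,y_n] → S′ = K[x_1,…,x_{n+1},y_1,…,y_{n+1}]`. -/
def liftS (K : Type) [Field K] (n : ℕ) :
    MvPolynomial (Fin n ⊕ Fin n) K →ₐ[K] MvPolynomial (Fin (n + 1) ⊕ Fin (n + 1)) K :=
  rename (Sum.map Fin.castSucc Fin.castSucc)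

/-! ### Ideals attached to a relation and a set of deleted vertices -/

/-- The minor `f_{ij} = x_i y_j - x_j y_i`. -/
def mnr (K : Type) [Field K] {σ : Type} (i j : σ) : MvPolynomial (σ ⊕ σ) K :=
  xv K i * yv K j - xv K j * yv K i

/-- The ideal generated by `x_v, y_v` for `v ∈ T` and by the minors `f_{ij}` for `E i j`.
The relation `E` need be neither symmetric nor irreflexive: `f_{ii} = 0`, `f_{ji} = -f_{ij}`. -/
def relIdeal (K : Type) [Field K] {σ : Type} (E : σ → σ → Prop) (T : Set σ) :
    Ideal (MvPolynomial (σ ⊕ σ) K) :=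
  Ideal.span (xv K '' T ∪ yv K '' T ∪ {f | ∃ i j, E i j ∧ f = mnr K i j})

section RelIdeal

variable {K : Type} [Field K] {σ : Type}

theorem mnr_self (i : σ) : mnr K i i = 0 := by
  simp [mnr]

theorem mnr_swap (i j : σ) : mnr K j i = -mnr K i j := by
  simp only [mnr]; ring

theorem xv_mem {E : σ → σ → Prop} {T : Set σ} {v : σ} (h : v ∈ T) : xv K v ∈ relIdeal K E T :=
  Ideal.subset_span (Or.inl (Or.inl ⟨v, h, rfl⟩))

theorem yv_mem {E : σ → σ → Prop} {T : Set σ} {v : σ} (h : v ∈ T) : yv K v ∈ relIdeal K E T :=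
  Ideal.subset_span (Or.inl (Or.inr ⟨v, h, rfl⟩))

theorem mnr_mem {E : σ → σ → Prop} {T : Set σ} {i j : σ} (h : E i j) :
    mnr K i j ∈ relIdeal K E T :=
  Ideal.subset_span (Or.inr ⟨i, j, h, rfl⟩)

theorem relIdeal_le {E : σ → σ → Prop} {T : Set σ} {I : Ideal (MvPolynomial (σ ⊕ σ) K)}
    (hx : ∀ v ∈ T, xv K v ∈ I) (hy : ∀ v ∈ T, yv K v ∈ I)
    (hE : ∀ i j, E i j → mnr K i j ∈ I) : relIdeal K E T ≤ I := by
  refine Ideal.span_le.2 ?_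
  rintro f ((⟨v, hv, rfl⟩ | ⟨v, hv, rfl⟩) | ⟨i, j, h, rfl⟩)
  · exact hx v hv
  · exact hy v hv
  · exact hE i j h

/-! ### Cluster graphs: the toric parametrization -/

open Classical in
/-- The images of the variables under the parametrization `x_i ↦ s_i a_{c(i)}`,
`y_i ↦ s_i b_{c(i)}` for `i ∉ T`, and `x_i, y_i ↦ 0` for `i ∈ T`. Here `c` sends a vertex to
(a name of) its component; `inl i`, `inr (inl q)`, `inr (inr q)` index `s_i`, `a_q`, `b_q`. -/
def tor (K : Type) [Field K] {σ Q : Type} (c : σ → Q) (T : Set σ) :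
    σ ⊕ σ → MvPolynomial (σ ⊕ (Q ⊕ Q)) K :=
  Sum.elim (fun i => if i ∈ T then 0 else X (Sum.inl i) * X (Sum.inr (Sum.inl (c i))))
    (fun i => if i ∈ T then 0 else X (Sum.inl i) * X (Sum.inr (Sum.inr (c i))))

/-- The vertex carrying a variable. -/
def vtx {σ : Type} : σ ⊕ σ → σ := Sum.elim id id

variable {Q : Type} {c : σ → Q} {T : Set σ}

theorem tor_inl {i : σ} (h : i ∉ T) :
    tor K c T (Sum.inl i) = X (Sum.inl i) * X (Sum.inr (Sum.inl (c i))) := by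
  simp [tor, h]

theorem tor_inr {i : σ} (h : i ∉ T) :
    tor K c T (Sum.inr i) = X (Sum.inl i) * X (Sum.inr (Sum.inr (c i))) := by
  simp [tor, h]

theorem tor_eq_zero {v : σ ⊕ σ} (h : vtx v ∈ T) : tor K c T v = 0 := by
  rcases v with i | i <;> simp only [vtx, Sum.elim_inl, Sum.elim_inr, id] at h <;> simp [tor, h]

theorem tor_ne_zero {v : σ ⊕ σ} (h : vtx v ∉ T) : tor K c T v ≠ 0 := by
  rcases v with i | i <;> simp only [vtx, Sum.elim_inl, Sum.elim_inr, id] at h <;> simp [tor, h]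

theorem s_dvd {v : σ ⊕ σ} (h : vtx v ∉ T) : X (Sum.inl (vtx v)) ∣ tor K c T v := by
  rcases v with i | i <;> simp only [vtx, Sum.elim_inl, Sum.elim_inr, id] at h ⊢ <;>
    simp [tor, h]

/-- A variable whose image is divisible by `s_i` is `x_i` or `y_i`. -/
theorem of_s_dvd {v : σ ⊕ σ} (h : vtx v ∉ T) {i : σ}
    (hd : (X (Sum.inl i) : MvPolynomial (σ ⊕ (Q ⊕ Q)) K) ∣ tor K c T v) : vtx v = i := by
  rcases v with j | j <;> simp only [vtx, Sum.elim_inl, Sum.elim_inr, id] at h ⊢ <;>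
    simpa [tor, h, X_dvd_mul_iff, X_dvd_X, eq_comm] using hd

theorem of_a_dvd {v : σ ⊕ σ} (h : vtx v ∉ T) {q : Q}
    (hd : (X (Sum.inr (Sum.inl q)) : MvPolynomial (σ ⊕ (Q ⊕ Q)) K) ∣ tor K c T v) :
    ∃ j, v = Sum.inl j ∧ c j = q := by
  rcases v with j | j <;> simp only [vtx, Sum.elim_inl, Sum.elim_inr, id] at h
  · simpa [tor, h, X_dvd_mul_iff, X_dvd_X, eq_comm] using hd
  · simp [tor, h, X_dvd_mul_iff, X_dvd_X] at hd

theorem of_b_dvd {v : σ ⊕ σ} (h : vtx v ∉ T) {q : Q}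
    (hd : (X (Sum.inr (Sum.inr q)) : MvPolynomial (σ ⊕ (Q ⊕ Q)) K) ∣ tor K c T v) :
    ∃ j, v = Sum.inr j ∧ c j = q := by
  rcases v with j | j <;> simp only [vtx, Sum.elim_inl, Sum.elim_inr, id] at h
  · simp [tor, h, X_dvd_mul_iff, X_dvd_X] at hd
  · simpa [tor, h, X_dvd_mul_iff, X_dvd_X, eq_comm] using hd

/-- Two monomials with the same nonzero image under the toric parametrization are congruent
modulo the ideal: cancel a common variable, after exchanging `x_j y_i` for `x_i y_j` in the second
monomial if it contains `y_i` where the first contains `x_i` (or conversely). -/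
theorem monomial_congr {E : σ → σ → Prop} (hE : ∀ i j, i ∉ T → j ∉ T → c i = c j → E i j)
    (ms : Multiset (σ ⊕ σ)) : ∀ ms' : Multiset (σ ⊕ σ),
    (∀ v ∈ ms, vtx v ∉ T) → (∀ v ∈ ms', vtx v ∉ T) →
    (ms.map (tor K c T)).prod = (ms'.map (tor K c T)).prod →
    (ms.map (X : σ ⊕ σ → MvPolynomial (σ ⊕ σ) K)).prod - (ms'.map X).prod ∈ relIdeal K E T := by
  classical
  induction ms using Multiset.induction_on with
  | empty =>
    intro ms' _ h' he
    rcases Multiset.empty_or_exists_mem ms' with rfl | ⟨v, hv⟩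
    · simp
    · exfalso
      have h1 : X (Sum.inl (vtx v)) ∣ (1 : MvPolynomial (σ ⊕ (Q ⊕ Q)) K) := by
        have := (s_dvd (K := K) (c := c) (h' v hv)).trans
          (Multiset.dvd_prod (Multiset.mem_map_of_mem (tor K c T) hv))
        rw [← he] at this
        simpa using this
      exact (X_prime (R := K) (i := (Sum.inl (vtx v) : σ ⊕ (Q ⊕ Q)))).not_isUnit
        (isUnit_of_dvd_one h1)
  | cons v ms ih =>
    intro ms' h h' he
    have hv : vtx v ∉ T := h v (Multiset.mem_cons_self _ _)
    have hms : ∀ v ∈ ms, vtx v ∉ T := fun w hw => h w (Multiset.mem_cons_of_mem hw)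
    -- the case in which both monomials contain the variable `v`
    have key : ∀ ns : Multiset (σ ⊕ σ), (∀ w ∈ ns, vtx w ∉ T) →
        ((v ::ₘ ms).map (tor K c T)).prod = ((v ::ₘ ns).map (tor K c T)).prod →
        ((v ::ₘ ms).map (X : σ ⊕ σ → MvPolynomial (σ ⊕ σ) K)).prod -
          ((v ::ₘ ns).map X).prod ∈ relIdeal K E T := by
      intro ns hns hp
      simp only [Multiset.map_cons, Multiset.prod_cons] at hp ⊢
      rw [← mul_sub]
      exact Ideal.mul_mem_left _ _ (ih ns hms hns (mul_left_cancel₀ (tor_ne_zero hv) hp))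
    -- a prime divisor of the image of `v` divides the image of a variable of `ms'`
    have find : ∀ p : MvPolynomial (σ ⊕ (Q ⊕ Q)) K, Prime p → p ∣ tor K c T v →
        ∃ w ∈ ms', p ∣ tor K c T w := by
      intro p hp hd
      refine hp.exists_mem_multiset_map_dvd ?_
      rw [← he, Multiset.map_cons, Multiset.prod_cons]
      exact hd.mul_right _
    obtain ⟨w, hw, hwd⟩ := find _ X_prime (s_dvd hv)
    have hwv := of_s_dvd (h' w hw) hwd
    obtain ⟨ns, rfl⟩ := Multiset.exists_cons_of_mem hw
    have hns : ∀ w ∈ ns, vtx w ∉ T := fun u hu => h' u (Multiset.mem_cons_of_mem hu)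
    by_cases hvw : w = v
    · subst hvw
      exact key ns hns he
    rcases v with i | i <;> rcases w with i' | i' <;>
      simp only [vtx, Sum.elim_inl, Sum.elim_inr, id] at hwv hv <;> subst hwv
    · exact absurd rfl hvw
    · obtain ⟨u, hu, hud⟩ := find (X (Sum.inr (Sum.inl (c i')))) X_prime
        (by rw [tor_inl hv]; exact dvd_mul_left _ _)
      obtain ⟨j, rfl, hj⟩ := of_a_dvd (h' u hu) hud
      have hu' : Sum.inl j ∈ ns := by simpa using hu
      obtain ⟨ls, rfl⟩ := Multiset.exists_cons_of_mem hu'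
      have hjT : j ∉ T := by simpa [vtx] using hns _ hu'
      have h1 := key (Sum.inr j ::ₘ ls) (by
          intro w hw
          rcases Multiset.mem_cons.1 hw with rfl | hw
          · simpa [vtx] using hjT
          · exact hns w (Multiset.mem_cons_of_mem hw)) (by
          rw [he]
          simp only [Multiset.map_cons, Multiset.prod_cons, tor_inl hv, tor_inr hv, tor_inl hjT,
            tor_inr hjT, hj]
          ring)
      have h2 : mnr K i' j * (ls.map X).prod ∈ relIdeal K E T :=
        Ideal.mul_mem_right _ _ (mnr_mem (hE i' j hv hjT hj.symm))
      have h3 := Ideal.add_mem _ h1 h2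
      simp only [Multiset.map_cons, Multiset.prod_cons, mnr, xv, yv] at h3 ⊢
      convert h3 using 1
      ring
    · obtain ⟨u, hu, hud⟩ := find (X (Sum.inr (Sum.inr (c i')))) X_prime
        (by rw [tor_inr hv]; exact dvd_mul_left _ _)
      obtain ⟨j, rfl, hj⟩ := of_b_dvd (h' u hu) hud
      have hu' : Sum.inr j ∈ ns := by simpa using hu
      obtain ⟨ls, rfl⟩ := Multiset.exists_cons_of_mem hu'
      have hjT : j ∉ T := by simpa [vtx] using hns _ hu'
      have h1 := key (Sum.inl j ::ₘ ls) (by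
          intro w hw
          rcases Multiset.mem_cons.1 hw with rfl | hw
          · simpa [vtx] using hjT
          · exact hns w (Multiset.mem_cons_of_mem hw)) (by
          rw [he]
          simp only [Multiset.map_cons, Multiset.prod_cons, tor_inl hv, tor_inr hv, tor_inl hjT,
            tor_inr hjT, hj]
          ring)
      have h2 : mnr K j i' * (ls.map X).prod ∈ relIdeal K E T :=
        Ideal.mul_mem_right _ _ (mnr_mem (hE j i' hjT hv hj))
      have h3 := Ideal.add_mem _ h1 h2
      simp only [Multiset.map_cons, Multiset.prod_cons, mnr, xv, yv] at h3 ⊢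
      convert h3 using 1
      ring
    · exact absurd rfl hvw

theorem prod_tor_monomial (ms : Multiset (σ ⊕ σ)) (h : ∀ v ∈ ms, vtx v ∉ T) :
    ∃ e, (ms.map (tor K c T)).prod = monomial e 1 := by
  induction ms using Multiset.induction_on with
  | empty => exact ⟨0, by simp⟩
  | cons v ms ih =>
    obtain ⟨e, he⟩ := ih fun w hw => h w (Multiset.mem_cons_of_mem hw)
    have hv := h v (Multiset.mem_cons_self _ _)
    rw [Multiset.map_cons, Multiset.prod_cons, he]
    rcases v with i | i <;> simp only [vtx, Sum.elim_inl, Sum.elim_inr, id] at hv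
    · rw [tor_inl hv]; simp only [X, monomial_mul, mul_one]; exact ⟨_, rfl⟩
    · rw [tor_inr hv]; simp only [X, monomial_mul, mul_one]; exact ⟨_, rfl⟩

/-- The kernel of the toric parametrization is contained in the ideal. The proof builds a linear
map `L` back to the quotient, sending a monomial in the image of the parametrization to the class
of any of its preimages; by `monomial_congr` it satisfies `L ∘ φ = mk`. -/
theorem mem_of_aeval_tor {E : σ → σ → Prop}
    (hE : ∀ i j, i ∉ T → j ∉ T → c i = c j → E i j) {f : MvPolynomial (σ ⊕ σ) K}
    (hf : aeval (tor K c T) f = 0) : f ∈ relIdeal K E T := by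
  classical
  let P : ((σ ⊕ (Q ⊕ Q)) →₀ ℕ) → Multiset (σ ⊕ σ) → Prop := fun e ms =>
    (∀ v ∈ ms, vtx v ∉ T) ∧ (ms.map (tor K c T)).prod = monomial e 1
  let L : MvPolynomial (σ ⊕ (Q ⊕ Q)) K →ₗ[K] MvPolynomial (σ ⊕ σ) K ⧸ relIdeal K E T :=
    (basisMonomials _ K).constr K fun e =>
      if h : ∃ ms, P e ms then Ideal.Quotient.mk _ ((h.choose.map X).prod) else 0
  have hL : L ∘ₗ (aeval (tor K c T)).toLinearMap =
      (Ideal.Quotient.mkₐ K (relIdeal K E T)).toLinearMap := by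
    refine (basisMonomials _ K).ext fun m => ?_
    have hm : (monomial m 1 : MvPolynomial (σ ⊕ σ) K) = (m.toMultiset.map X).prod := by
      rw [Finsupp.toMultiset_map, Finsupp.prod_toMultiset, Finsupp.prod_mapDomain_index
        (by simp) (by intros; rw [pow_add]), monomial_eq, C_1, one_mul]
    have hm2 : aeval (tor K c T) (monomial m 1 : MvPolynomial (σ ⊕ σ) K) =
        (m.toMultiset.map (tor K c T)).prod := by
      rw [hm, map_multiset_prod, Multiset.map_map]
      simp [Function.comp_def]
    simp only [coe_basisMonomials, LinearMap.comp_apply, AlgHom.toLinearMap_apply, hm2,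
      Ideal.Quotient.mkₐ_eq_mk]
    by_cases hT : ∀ v ∈ m.toMultiset, vtx v ∉ T
    · obtain ⟨e, he⟩ := prod_tor_monomial (K := K) (c := c) _ hT
      have hex : ∃ ms, P e ms := ⟨_, hT, he⟩
      have hLe : L (monomial e 1) = Ideal.Quotient.mk _ ((hex.choose.map X).prod) := by
        have := (basisMonomials (σ ⊕ (Q ⊕ Q)) K).constr_basis K (fun e =>
          if h : ∃ ms, P e ms then Ideal.Quotient.mk (relIdeal K E T) ((h.choose.map X).prod)
          else 0) e
        rw [coe_basisMonomials] at this
        rw [dif_pos hex] at this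
        exact this
      rw [he, hLe, hm]
      exact Ideal.Quotient.eq.2 (monomial_congr hE _ _ hex.choose_spec.1 hT
        (hex.choose_spec.2.trans he.symm))
    · push Not at hT
      obtain ⟨v, hv, hvT⟩ := hT
      rw [Multiset.prod_eq_zero (Multiset.mem_map.2 ⟨v, hv, tor_eq_zero hvT⟩), map_zero, eq_comm,
        hm]
      refine Ideal.Quotient.eq_zero_iff_mem.2 (Ideal.mem_of_dvd _
        (Multiset.dvd_prod (Multiset.mem_map_of_mem X hv)) ?_)
      rcases v with i | i
      · exact xv_mem hvT
      · exact yv_mem hvT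
  have := LinearMap.congr_fun hL f
  simp only [LinearMap.comp_apply, AlgHom.toLinearMap_apply, hf, map_zero,
    Ideal.Quotient.mkₐ_eq_mk] at this
  exact Ideal.Quotient.eq_zero_iff_mem.1 this.symm

/-- Conversely the ideal is contained in the kernel of the toric parametrization. -/
theorem aeval_tor_eq_zero {E : σ → σ → Prop}
    (hE : ∀ i j, i ∉ T → j ∉ T → E i j → c i = c j) {f : MvPolynomial (σ ⊕ σ) K}
    (hf : f ∈ relIdeal K E T) : aeval (tor K c T) f = 0 := by
  have : relIdeal K E T ≤ RingHom.ker (aeval (R := K) (tor K c T)) := by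
    refine relIdeal_le ?_ ?_ ?_
    · intro v hv
      simpa [xv, RingHom.mem_ker] using tor_eq_zero (v := Sum.inl v) hv
    · intro v hv
      simpa [yv, RingHom.mem_ker] using tor_eq_zero (v := Sum.inr v) hv
    · intro i j hij
      simp only [RingHom.mem_ker, mnr, xv, yv, map_sub, map_mul, aeval_X]
      by_cases hi : i ∈ T
      · rw [tor_eq_zero (v := Sum.inl i) hi, tor_eq_zero (v := Sum.inr i) hi]; ring
      by_cases hj : j ∈ T
      · rw [tor_eq_zero (v := Sum.inl j) hj, tor_eq_zero (v := Sum.inr j) hj]; ring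
      rw [tor_inl hi, tor_inl hj, tor_inr hi, tor_inr hj, hE i j hi hj hij]
      ring
  exact this hf

/-- If `E` is an equivalence relation off `T`, the ideal is a toric prime, and it contains `x_w`
only if `w ∈ T`, in which case it contains `y_w`. -/
theorem colon_of_cluster {E : σ → σ → Prop} (hr : ∀ i, E i i) (hs : ∀ i j, E i j → E j i)
    (ht : ∀ i j k, i ∉ T → j ∉ T → k ∉ T → E i j → E j k → E i k) (w : σ)
    {b : MvPolynomial (σ ⊕ σ) K} (hb : xv K w * b ∈ relIdeal K E T) :
    yv K w * b ∈ relIdeal K E T := by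
  by_cases hw : w ∈ T
  · exact Ideal.mul_mem_right _ _ (yv_mem hw)
  -- name the component of `i` by the set of vertices outside `T` that are related to `i`
  let c : σ → Set σ := fun i => {j | j ∉ T ∧ E i j}
  have h1 : ∀ i j, i ∉ T → j ∉ T → c i = c j → E i j := by
    intro i j hi hj h
    have : j ∈ c i := by rw [h]; exact ⟨hj, hr j⟩
    exact this.2
  have h2 : ∀ i j, i ∉ T → j ∉ T → E i j → c i = c j := by
    intro i j hi hj h
    ext k
    exact ⟨fun hk => ⟨hk.1, ht j i k hj hi hk.1 (hs _ _ h) hk.2⟩,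
      fun hk => ⟨hk.1, ht i j k hi hj hk.1 h hk.2⟩⟩
  have h3 := aeval_tor_eq_zero h2 hb
  rw [map_mul, xv, aeval_X] at h3
  exact Ideal.mul_mem_left _ _ (mem_of_aeval_tor h1
    ((mul_eq_zero.1 h3).resolve_left (tor_ne_zero (v := Sum.inl w) hw)))

/-! ### Splitting off a missing edge -/

/-- The substitution `z ↦ 0` for the variables `z ∈ A`, all other variables being fixed. -/
def kill (K : Type) [Field K] {τ : Type} (A : Set τ) : MvPolynomial τ K →ₐ[K] MvPolynomial τ K :=
  open Classical in aeval fun v => if v ∈ A then 0 else X v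

theorem kill_of_mem {τ : Type} {A : Set τ} {v : τ} (h : v ∈ A) :
    kill K A (X v) = 0 := by
  simp [kill, h]

theorem kill_of_notMem {τ : Type} {A : Set τ} {v : τ} (h : v ∉ A) :
    kill K A (X v) = X v := by
  simp [kill, h]

theorem sub_kill_mem {τ : Type} (A : Set τ) (f : MvPolynomial τ K) :
    f - kill K A f ∈ Ideal.span (X '' A : Set (MvPolynomial τ K)) := by
  rw [← Ideal.Quotient.eq]
  have : (Ideal.Quotient.mkₐ K (Ideal.span (X '' A : Set (MvPolynomial τ K)))) =
      (Ideal.Quotient.mkₐ K (Ideal.span (X '' A : Set (MvPolynomial τ K)))).comp (kill K A) := by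
    refine algHom_ext fun v => ?_
    by_cases hv : v ∈ A
    · rw [AlgHom.comp_apply, kill_of_mem hv, map_zero]
      exact Ideal.Quotient.eq_zero_iff_mem.2 (Ideal.subset_span ⟨v, hv, rfl⟩)
    · rw [AlgHom.comp_apply, kill_of_notMem hv]
  exact DFunLike.congr_fun this f

/-- If `v` is joined to `i` and `j`, then `I(E, T)` contains the intersection of the ideal with the
additional edge `{i, j}` and the ideal with the vertex `v` deleted. -/
theorem mem_of_split {E : σ → σ → Prop} {v i j : σ} (hvi : E i v) (hvj : E v j)
    (hiv : i ≠ v) (hjv : j ≠ v) (hv : v ∉ T) {f : MvPolynomial (σ ⊕ σ) K}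
    (h1 : f ∈ relIdeal K (fun a b => E a b ∨ (a = i ∧ b = j) ∨ (a = j ∧ b = i)) T)
    (h2 : f ∈ relIdeal K E (insert v T)) : f ∈ relIdeal K E T := by
  let A : Set (σ ⊕ σ) := {Sum.inl v, Sum.inr v}
  have hx : ∀ a, a ≠ v → kill K A (xv K a) = xv K a := fun a ha =>
    kill_of_notMem (by simp [A, ha])
  have hy : ∀ a, a ≠ v → kill K A (yv K a) = yv K a := fun a ha =>
    kill_of_notMem (by simp [A, ha])
  have hx0 : kill K A (xv K v) = 0 := kill_of_mem (by simp [A])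
  have hy0 : kill K A (yv K v) = 0 := kill_of_mem (by simp [A])
  have hmn : ∀ a b, E a b → kill K A (mnr K a b) ∈ relIdeal K E T := by
    intro a b hab
    simp only [mnr, map_sub, map_mul]
    by_cases ha : a = v
    · subst ha; simp [hx0, hy0]
    by_cases hb : b = v
    · subst hb; simp [hx0, hy0]
    rw [hx a ha, hy b hb, hx b hb, hy a ha]
    exact mnr_mem hab
  have hkill : relIdeal K E (insert v T) ≤ (relIdeal K E T).comap (kill K A) := by
    refine relIdeal_le ?_ ?_ fun a b hab => hmn a b hab
    · rintro a (rfl | ha)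
      · simp [Ideal.mem_comap, hx0]
      · rw [Ideal.mem_comap, hx a (by rintro rfl; exact hv ha)]; exact xv_mem ha
    · rintro a (rfl | ha)
      · simp [Ideal.mem_comap, hy0]
      · rw [Ideal.mem_comap, hy a (by rintro rfl; exact hv ha)]; exact yv_mem ha
  have hle : relIdeal K (fun a b => E a b ∨ (a = i ∧ b = j) ∨ (a = j ∧ b = i)) T ≤
      Ideal.span {mnr K i j} ⊔ relIdeal K E T := by
    refine relIdeal_le (fun a ha => Ideal.mem_sup_right (xv_mem ha))
      (fun a ha => Ideal.mem_sup_right (yv_mem ha)) ?_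
    rintro a b (h | ⟨rfl, rfl⟩ | ⟨rfl, rfl⟩)
    · exact Ideal.mem_sup_right (mnr_mem h)
    · exact Ideal.mem_sup_left (Ideal.mem_span_singleton_self _)
    · rw [mnr_swap b a]
      exact Ideal.mem_sup_left (neg_mem (Ideal.mem_span_singleton_self _))
  obtain ⟨_, hg', g, hg, rfl⟩ := Submodule.mem_sup.1 (hle h1)
  obtain ⟨d, rfl⟩ := Ideal.mem_span_singleton'.1 hg'
  -- `x_v f_{ij}` and `y_v f_{ij}` lie in the ideal, by the Plücker-type relations
  have hd : (d - kill K A d) * mnr K i j ∈ relIdeal K E T := by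
    have hs : Ideal.span (X '' A : Set (MvPolynomial (σ ⊕ σ) K)) ≤
        (relIdeal K E T).colon {mnr K i j} := by
      refine Ideal.span_le.2 ?_
      rintro _ ⟨u, hu, rfl⟩
      have hiv' : mnr K i v ∈ relIdeal K E T := mnr_mem hvi
      have hvj' : mnr K v j ∈ relIdeal K E T := mnr_mem hvj
      refine Submodule.mem_colon_singleton.2 ?_
      rcases hu with rfl | rfl
      · have := Ideal.add_mem _ (Ideal.mul_mem_left _ (xv K i) hvj')
          (Ideal.mul_mem_left _ (xv K j) hiv')
        convert this using 1
        simp only [mnr, xv, yv, smul_eq_mul]; ring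
      · have := Ideal.add_mem _ (Ideal.mul_mem_left _ (yv K i) hvj')
          (Ideal.mul_mem_left _ (yv K j) hiv')
        convert this using 1
        simp only [mnr, xv, yv, smul_eq_mul]; ring
    exact Submodule.mem_colon_singleton.1 (hs (sub_kill_mem A d))
  have hkg : kill K A g ∈ relIdeal K E T :=
    hkill (relIdeal_le (fun a ha => xv_mem (Set.mem_insert_of_mem _ ha))
      (fun a ha => yv_mem (Set.mem_insert_of_mem _ ha)) (fun a b h => mnr_mem h) hg)
  have hkf : kill K A (d * mnr K i j + g) ∈ relIdeal K E T := hkill h2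
  have hkm : kill K A (mnr K i j) = mnr K i j := by
    simp only [mnr, map_sub, map_mul, hx i hiv, hx j hjv, hy i hiv, hy j hjv]
  rw [map_add, map_mul, hkm] at hkf
  have := Ideal.add_mem _ (Ideal.add_mem _ hd (Ideal.sub_mem _ hkf hkg)) hg
  convert this using 1
  ring

theorem relIdeal_mono {E E' : σ → σ → Prop} {T T' : Set σ} (hE : ∀ i j, E i j → E' i j)
    (hT : T ⊆ T') : relIdeal K E T ≤ relIdeal K E' T' :=
  relIdeal_le (fun _ h => xv_mem (hT h)) (fun _ h => yv_mem (hT h))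
    fun i j h => mnr_mem (hE i j h)

/-- Induction on the number of missing edges plus the number of vertices not deleted: as long as
`E` is not transitive off `T`, split by `mem_of_split`. -/
theorem colon_aux [Finite σ] (w : σ) (b : MvPolynomial (σ ⊕ σ) K) (N : ℕ) :
    ∀ (E : σ → σ → Prop) (T : Set σ), (∀ i, E i i) → (∀ i j, E i j → E j i) →
      {p : σ × σ | ¬ E p.1 p.2}.ncard + Tᶜ.ncard = N →
      xv K w * b ∈ relIdeal K E T → yv K w * b ∈ relIdeal K E T := by
  induction N using Nat.strong_induction_on with
  | _ N ih =>
    intro E T hr hs hN hb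
    by_cases ht : ∀ i j k, i ∉ T → j ∉ T → k ∉ T → E i j → E j k → E i k
    · exact colon_of_cluster hr hs ht w hb
    push Not at ht
    obtain ⟨i, v, j, hi, hv, hj, hiv, hvj, hij⟩ := ht
    refine mem_of_split hiv hvj (by rintro rfl; exact hij hvj) (by rintro rfl; exact hij hiv) hv
      ?_ ?_
    · refine ih _ ?_ _ T (fun a => Or.inl (hr a)) ?_ rfl
        (relIdeal_mono (fun _ _ h => Or.inl h) subset_rfl hb)
      · rw [← hN]
        refine Nat.add_lt_add_right (Set.ncard_lt_ncard ⟨?_, fun h => ?_⟩) _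
        · intro p hp hE
          exact hp (Or.inl hE)
        · exact h (a := (i, j)) hij (Or.inr (Or.inl ⟨rfl, rfl⟩))
      · rintro a b (h | h | h)
        · exact Or.inl (hs _ _ h)
        · exact Or.inr (Or.inr ⟨h.2, h.1⟩)
        · exact Or.inr (Or.inl ⟨h.2, h.1⟩)
    · refine ih _ ?_ E _ hr hs rfl (relIdeal_mono (fun _ _ h => h) (Set.subset_insert v T) hb)
      rw [← hN]
      refine Nat.add_lt_add_left (Set.ncard_lt_ncard ⟨?_, fun h => ?_⟩) _
      · exact Set.compl_subset_compl.2 (Set.subset_insert v T)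
      · exact h (a := v) hv (Set.mem_insert v T)

/-- For a binomial edge ideal `J`, the colon ideal `J : x_w` is contained in `J : y_w`. -/
theorem colon [Finite σ] {E : σ → σ → Prop} (hs : ∀ i j, E i j → E j i) (w : σ)
    {b : MvPolynomial (σ ⊕ σ) K} (hb : xv K w * b ∈ relIdeal K E ∅) :
    yv K w * b ∈ relIdeal K E ∅ := by
  have h := colon_aux w b _ (fun i j => i = j ∨ E i j) ∅ (fun i => Or.inl rfl)
    (fun i j h => h.imp Eq.symm (hs i j)) rfl
    (relIdeal_mono (fun _ _ h => Or.inr h) subset_rfl hb)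
  refine relIdeal_le (fun _ h => xv_mem h) (fun _ h => yv_mem h) ?_ h
  rintro i j (rfl | h)
  · rw [mnr_self]; exact zero_mem _
  · exact mnr_mem h

end RelIdeal

/-! ### Nonzerodivisors modulo binomial edge ideals -/

section Nonzerodivisors

variable {K : Type} [Field K] {τ σ : Type}

/-- A polynomial, read as a univariate polynomial in the variable `e`; for convenience the
coefficients are kept in the full polynomial ring. -/
def asPoly (K : Type) [Field K] {τ : Type} (e : τ) :
    MvPolynomial τ K →ₐ[K] Polynomial (MvPolynomial τ K) :=
  open Classical in aeval fun v => if v = e then Polynomial.X else Polynomial.C (X v)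

theorem asPoly_self (e : τ) : asPoly K e (X e) = Polynomial.X := by
  simp [asPoly]

theorem asPoly_of_ne {e v : τ} (h : v ≠ e) : asPoly K e (X v) = Polynomial.C (X v) := by
  simp [asPoly, h]

theorem eval_asPoly (e : τ) (f : MvPolynomial τ K) : (asPoly K e f).eval (X e) = f := by
  have : ((Polynomial.aeval (R := MvPolynomial τ K) (X e : MvPolynomial τ K)).restrictScalars
      K).comp (asPoly K e) = AlgHom.id K _ := by
    refine algHom_ext fun v => ?_
    by_cases h : v = e
    · subst h; simp [asPoly_self]
    · simp [asPoly_of_ne h]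
  simpa [Polynomial.aeval_def, Polynomial.eval₂_eq_eval_map] using DFunLike.congr_fun this f

/-- The ideal `J` is extended from the polynomial ring without the variable `e`, in the sense that
the coefficients, with respect to `e`, of its members again belong to `J`. -/
def IsFreeOf (e : τ) (J : Ideal (MvPolynomial τ K)) : Prop :=
  ∀ f ∈ J, ∀ k, (asPoly K e f).coeff k ∈ J

theorem IsFreeOf.mem {e : τ} {J : Ideal (MvPolynomial τ K)} {f : MvPolynomial τ K}
    (h : ∀ k, (asPoly K e f).coeff k ∈ J) : f ∈ J := by
  rw [← eval_asPoly e f, Polynomial.eval_eq_sum_range]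
  exact Ideal.sum_mem _ fun k _ => Ideal.mul_mem_right _ _ (h k)

theorem IsFreeOf.of_mul_mem {e : τ} {J : Ideal (MvPolynomial τ K)} (hJ : IsFreeOf e J)
    {f : MvPolynomial τ K} (h : X e * f ∈ J) : f ∈ J := by
  refine IsFreeOf.mem (e := e) fun k => ?_
  have := hJ _ h (k + 1)
  rwa [map_mul, asPoly_self, Polynomial.coeff_X_mul] at this

theorem isFreeOf_relIdeal {E : σ → σ → Prop} {e : σ ⊕ σ}
    (h : ∀ i j, E i j → i ≠ vtx e ∧ j ≠ vtx e) :
    IsFreeOf e (relIdeal K E ∅) := by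
  intro f hf
  refine Ideal.mem_map_C_iff.1 ?_
  have : relIdeal K E ∅ ≤ (Ideal.map Polynomial.C (relIdeal K E ∅)).comap (asPoly K e) := by
    refine relIdeal_le (by simp) (by simp) fun i j hij => ?_
    have hl : ∀ i, i ≠ vtx e → (Sum.inl i : σ ⊕ σ) ≠ e := by rintro i hi rfl; exact hi rfl
    have hr : ∀ i, i ≠ vtx e → (Sum.inr i : σ ⊕ σ) ≠ e := by rintro i hi rfl; exact hi rfl
    obtain ⟨hi, hj⟩ := h i j hij
    have h2 : asPoly K e (mnr K i j) = Polynomial.C (mnr K i j) := by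
      simp only [mnr, xv, yv, map_sub, map_mul, asPoly_of_ne (hl i hi), asPoly_of_ne (hr i hi),
        asPoly_of_ne (hl j hj), asPoly_of_ne (hr j hj)]
    rw [Ideal.mem_comap, h2]
    exact Ideal.mem_map_of_mem _ (mnr_mem hij)
  exact this hf

/-- If `w` is a leaf, attached at the vertex `m` to a graph `E`, then `x_w` is a nonzerodivisor
modulo the binomial edge ideal. Writing `x_w a = b f_{mw} + g` with `g` in the ideal of `E` and
putting `x_w = 0` shows that the `x_w`-free part `b₀` of `b` is annihilated by `x_m`, hence, by
`colon`, by `y_m`; so `b₀ f_{mw}` may be dropped, and then `x_w` can be cancelled. -/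
theorem leaf_of_mul_mem [Finite σ] {E : σ → σ → Prop} (hs : ∀ i j, E i j → E j i) {m w : σ}
    (hm : m ≠ w) (hw : ∀ i j, E i j → i ≠ w ∧ j ≠ w) {a : MvPolynomial (σ ⊕ σ) K}
    (ha : xv K w * a ∈ Ideal.span {mnr K m w} ⊔ relIdeal K E ∅) :
    a ∈ Ideal.span {mnr K m w} ⊔ relIdeal K E ∅ := by
  have fx : IsFreeOf (Sum.inl w) (relIdeal K E ∅) := isFreeOf_relIdeal hw
  have fy : IsFreeOf (Sum.inr w) (relIdeal K E ∅) := isFreeOf_relIdeal hw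
  obtain ⟨_, hg', g, hg, h⟩ := Submodule.mem_sup.1 ha
  obtain ⟨b, rfl⟩ := Ideal.mem_span_singleton'.1 hg'
  let A : Set (σ ⊕ σ) := {Sum.inl w}
  have hx0 : kill K A (xv K w) = 0 := kill_of_mem (by simp [A])
  have hx : ∀ i, i ≠ w → kill K A (xv K i) = xv K i := fun i hi =>
    kill_of_notMem (by simp [A, hi])
  have hy : ∀ i, kill K A (yv K i) = yv K i := fun i =>
    kill_of_notMem (by simp [A])
  have hkill : relIdeal K E ∅ ≤ (relIdeal K E ∅).comap (kill K A) := by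
    refine relIdeal_le (by simp) (by simp) fun i j hij => ?_
    obtain ⟨hi, hj⟩ := hw i j hij
    rw [Ideal.mem_comap]
    simp only [mnr, map_sub, map_mul, hx i hi, hx j hj, hy]
    exact mnr_mem hij
  have hkg : kill K A g ∈ relIdeal K E ∅ := hkill hg
  obtain ⟨b', hb'⟩ : ∃ b', b' * xv K w = b - kill K A b := by
    have := sub_kill_mem A b
    rw [Set.image_singleton] at this
    exact Ideal.mem_span_singleton'.1 this
  have h0 : kill K A b * (xv K m * yv K w) + kill K A g = 0 := by
    have := congrArg (kill K A) h
    simpa only [mnr, map_add, map_mul, map_sub, hx0, hx m hm, hy, zero_mul, sub_zero] using this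
  have h1 : xv K m * kill K A b ∈ relIdeal K E ∅ := by
    refine fy.of_mul_mem ?_
    have := neg_mem hkg
    convert this using 1
    change yv K w * _ = _
    linear_combination h0
  have h2 := colon hs m h1
  have h3 : a - b' * mnr K m w ∈ relIdeal K E ∅ := by
    refine fx.of_mul_mem ?_
    have := Ideal.add_mem _ (Ideal.sub_mem _ (Ideal.mul_mem_left _ (yv K w) h1)
      (Ideal.mul_mem_left _ (xv K w) h2)) hg
    convert this using 1
    change xv K w * _ = _
    simp only [mnr] at h hb' ⊢
    linear_combination -h - (xv K m * yv K w - xv K w * yv K m) * hb'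
  have := Ideal.add_mem _ (Ideal.mem_sup_right (R := MvPolynomial (σ ⊕ σ) K)
    (S := Ideal.span {mnr K m w}) h3)
    (Ideal.mem_sup_left (Ideal.mul_mem_left _ b' (Ideal.mem_span_singleton_self (mnr K m w))))
  simpa using this

/-- If `J` does not involve `y_z` and `x_w` is a nonzerodivisor modulo `J`, then so is
`f_{wz} = x_w y_z - x_z y_w`, a polynomial in `y_z` with leading coefficient `x_w`. -/
theorem mnr_of_mul_mem {J : Ideal (MvPolynomial (σ ⊕ σ) K)} {w z : σ} (hz : w ≠ z)
    (hJ : IsFreeOf (Sum.inr z) J) (hw : ∀ a, xv K w * a ∈ J → a ∈ J)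
    {a : MvPolynomial (σ ⊕ σ) K} (ha : mnr K w z * a ∈ J) : a ∈ J := by
  have hc : ∀ k, xv K w * (asPoly K (Sum.inr z) a).coeff k -
      xv K z * yv K w * (asPoly K (Sum.inr z) a).coeff (k + 1) ∈ J := by
    intro k
    have := hJ _ ha (k + 1)
    have h1 : asPoly K (Sum.inr z) (xv K w) = Polynomial.C (xv K w) := asPoly_of_ne (by simp)
    have h2 : asPoly K (Sum.inr z) (xv K z) = Polynomial.C (xv K z) := asPoly_of_ne (by simp)
    have h3 : asPoly K (Sum.inr z) (yv K w) = Polynomial.C (yv K w) :=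
      asPoly_of_ne (by simpa using hz)
    have h4 : asPoly K (Sum.inr z) (yv K z) = Polynomial.X := asPoly_self _
    rw [map_mul, mnr, map_sub, map_mul, map_mul, h1, h2, h3, h4, sub_mul, mul_assoc,
      Polynomial.coeff_sub, Polynomial.coeff_C_mul, Polynomial.coeff_X_mul, mul_assoc,
      Polynomial.coeff_C_mul, Polynomial.coeff_C_mul, ← mul_assoc (xv K z)] at this
    exact this
  refine IsFreeOf.mem (e := Sum.inr z) fun k => ?_
  -- descending induction on the exponent of `y_z`
  suffices H : ∀ d k, (asPoly K (Sum.inr z) a).natDegree < k + d →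
      (asPoly K (Sum.inr z) a).coeff k ∈ J from H ((asPoly K (Sum.inr z) a).natDegree + 1) k
        (by omega)
  intro d
  induction d with
  | zero =>
    intro k hk
    rw [Polynomial.coeff_eq_zero_of_natDegree_lt (by omega)]
    exact zero_mem _
  | succ d ih =>
    intro k hk
    have := Ideal.add_mem _ (hc k) (Ideal.mul_mem_left _ (xv K z * yv K w) (ih (k + 1) (by omega)))
    rw [sub_add_cancel] at this
    exact hw _ this

end Nonzerodivisors

/-! ### Hilbert series of a quotient by a homogeneous nonzerodivisor -/

section Hilbert

variable {K : Type} [Field K] {τ : Type}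

attribute [local instance] MvPolynomial.gradedAlgebra

/-- The degree `m` component of `S/I`. -/
def piece (I : Ideal (MvPolynomial τ K)) (m : ℕ) : Submodule K (MvPolynomial τ K ⧸ I) :=
  Submodule.map (Ideal.Quotient.mkₐ K I).toLinearMap (homogeneousSubmodule τ K m)

theorem mem_piece {I : Ideal (MvPolynomial τ K)} {m : ℕ} {x : MvPolynomial τ K ⧸ I} :
    x ∈ piece I m ↔ ∃ p : MvPolynomial τ K, p.IsHomogeneous m ∧ Ideal.Quotient.mk I p = x :=
  Iff.rfl

theorem finite_piece [Finite τ] (I : Ideal (MvPolynomial τ K)) (m : ℕ) :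
    Module.Finite K (piece I m) :=
  Module.Finite.iff_fg.2 ((homogeneousSubmodule_fg τ K m).map _)

/-- Homogeneous elements of degree `m` of `I + (F)` are `g + c F` with `g ∈ I` and `c`
homogeneous of degree `m - d` (and `c = 0` if `m < d`). -/
theorem homogeneous_mem_sup {I : Ideal (MvPolynomial τ K)}
    (hI : I.IsHomogeneous (homogeneousSubmodule τ K)) {F : MvPolynomial τ K} {d : ℕ}
    (hF : F.IsHomogeneous d) {m : ℕ} {p : MvPolynomial τ K} (hp : p.IsHomogeneous m)
    (h : p ∈ I ⊔ Ideal.span {F}) :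
    (m < d ∧ p ∈ I) ∨ ∃ k, m = k + d ∧ ∃ c : MvPolynomial τ K, c.IsHomogeneous k ∧
      p - c * F ∈ I := by
  obtain ⟨g, hg, _, hg', rfl⟩ := Submodule.mem_sup.1 h
  obtain ⟨c, rfl⟩ := Ideal.mem_span_singleton'.1 hg'
  have hgm : homogeneousComponent m g ∈ I := homogeneousComponent_mem_of_mem hI hg m
  have hpm : homogeneousComponent m (g + c * F) = g + c * F := homogeneousComponent_eq_self hp
  have hdec : ∀ q : MvPolynomial τ K, ((DirectSum.decompose (homogeneousSubmodule τ K) q m :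
      homogeneousSubmodule τ K m) : MvPolynomial τ K) = homogeneousComponent m q :=
    fun q => decomposition.decompose'_apply q m
  rcases lt_or_ge m d with hlt | hle
  · refine Or.inl ⟨hlt, ?_⟩
    have := DirectSum.coe_decompose_mul_of_right_mem_of_not_le (homogeneousSubmodule τ K)
      (a := c) (b := F) (i := d) (n := m) hF (by omega)
    rw [hdec] at this
    rw [← hpm, map_add, this, add_zero]
    exact hgm
  · refine Or.inr ⟨m - d, by omega, homogeneousComponent (m - d) c,
      homogeneousComponent_isHomogeneous _ _, ?_⟩
    have := DirectSum.coe_decompose_mul_of_right_mem_of_le (homogeneousSubmodule τ K)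
      (a := c) (b := F) (i := d) (n := m) hF hle
    rw [hdec] at this
    have h2 : ((DirectSum.decompose (homogeneousSubmodule τ K) c (m - d) :
      homogeneousSubmodule τ K (m - d)) : MvPolynomial τ K) = homogeneousComponent (m - d) c :=
      decomposition.decompose'_apply c (m - d)
    rw [h2] at this
    rw [← hpm, map_add, this, add_sub_cancel_right]
    exact hgm

/-- Rank-nullity for the projection `(S/I)_m → (S/(I+(F)))_m`, whose kernel is `F · (S/I)_{m-d}`. -/
theorem finrank_piece [Finite τ] {I : Ideal (MvPolynomial τ K)}
    (hI : I.IsHomogeneous (homogeneousSubmodule τ K)) {F : MvPolynomial τ K} {d : ℕ}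
    (hF : F.IsHomogeneous d) (hnzd : ∀ a, F * a ∈ I → a ∈ I) (m : ℕ) :
    Module.finrank K (piece (I ⊔ Ideal.span {F}) m) +
      (if d ≤ m then Module.finrank K (piece I (m - d)) else 0) =
    Module.finrank K (piece I m) := by
  have := finite_piece I m
  let π : MvPolynomial τ K ⧸ I →ₗ[K] MvPolynomial τ K ⧸ (I ⊔ Ideal.span {F}) :=
    (Ideal.Quotient.factorₐ K (le_sup_left : I ≤ I ⊔ Ideal.span {F})).toLinearMap
  have hπ : ∀ p, π (Ideal.Quotient.mk I p) = Ideal.Quotient.mk _ p := fun p => rfl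
  have hmap : (piece I m).map π = piece (I ⊔ Ideal.span {F}) m := by
    rw [piece, piece, ← Submodule.map_comp]; rfl
  have hrn := (π.domRestrict (piece I m)).finrank_range_add_finrank_ker
  rw [LinearMap.range_domRestrict, hmap] at hrn
  rw [← hrn]
  congr 1
  rw [(Submodule.equivSubtypeMap (piece I m)
    (LinearMap.ker (π.domRestrict (piece I m)))).finrank_eq]
  have hker : ∀ x, x ∈ (LinearMap.ker (π.domRestrict (piece I m))).map (piece I m).subtype ↔
      x ∈ piece I m ∧ π x = 0 := by
    intro x; simp [and_comm]
  split_ifs with hle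
  · -- the kernel is the image of `(S/I)_{m-d}` under multiplication by `F`
    let μ : MvPolynomial τ K ⧸ I →ₗ[K] MvPolynomial τ K ⧸ I :=
      LinearMap.mulLeft K (Ideal.Quotient.mk I F)
    have hinj : Function.Injective μ := by
      rw [← LinearMap.ker_eq_bot, LinearMap.ker_eq_bot']
      intro x hx
      obtain ⟨p, rfl⟩ := Ideal.Quotient.mk_surjective x
      have : Ideal.Quotient.mk I (F * p) = 0 := by rw [map_mul]; exact hx
      exact Ideal.Quotient.eq_zero_iff_mem.2 (hnzd _ (Ideal.Quotient.eq_zero_iff_mem.1 this))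
    rw [(Submodule.equivMapOfInjective μ hinj (piece I (m - d))).finrank_eq]
    have heq : (piece I (m - d)).map μ =
        (LinearMap.ker (π.domRestrict (piece I m))).map (piece I m).subtype := by
      ext x
      rw [hker]
      constructor
      · rintro ⟨_, ⟨p, hp, rfl⟩, rfl⟩
        refine ⟨mem_piece.2 ⟨F * p, ?_, map_mul _ _ _⟩, ?_⟩
        · have := hF.mul hp
          rwa [Nat.add_sub_cancel' hle] at this
        · change π (Ideal.Quotient.mk I (F * p)) = 0
          rw [hπ]
          exact Ideal.Quotient.eq_zero_iff_mem.2
            (Ideal.mul_mem_right _ _ (Ideal.mem_sup_right (Ideal.mem_span_singleton_self F)))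
      · rintro ⟨hx, hx0⟩
        obtain ⟨p, hp, rfl⟩ := mem_piece.1 hx
        rw [hπ] at hx0
        rcases homogeneous_mem_sup hI hF hp (Ideal.Quotient.eq_zero_iff_mem.1 hx0) with
          ⟨hlt, -⟩ | ⟨k, rfl, c, hc, hpc⟩
        · omega
        · refine ⟨Ideal.Quotient.mk I c, mem_piece.2 ⟨c, by simpa using hc, rfl⟩, ?_⟩
          change Ideal.Quotient.mk I (F * c) = _
          rw [mul_comm]
          exact (Ideal.Quotient.eq.2 hpc).symm
    rw [heq]
  · have hbot : (LinearMap.ker (π.domRestrict (piece I m))).map (piece I m).subtype = ⊥ := by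
      refine (Submodule.eq_bot_iff _).2 fun x hx => ?_
      obtain ⟨hx, hx0⟩ := (hker x).1 hx
      obtain ⟨p, hp, rfl⟩ := mem_piece.1 hx
      rw [hπ] at hx0
      rcases homogeneous_mem_sup hI hF hp (Ideal.Quotient.eq_zero_iff_mem.1 hx0) with
        ⟨-, h⟩ | ⟨k, rfl, -⟩
      · exact Ideal.Quotient.eq_zero_iff_mem.2 h
      · omega
    rw [hbot, finrank_bot]

theorem hseries_sup [Finite τ] {I : Ideal (MvPolynomial τ K)}
    (hI : I.IsHomogeneous (homogeneousSubmodule τ K)) {F : MvPolynomial τ K}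
    (hF : F.IsHomogeneous 2) (hnzd : ∀ a, F * a ∈ I → a ∈ I) :
    hseries K (I ⊔ Ideal.span {F}) = (1 - t ^ 2) * hseries K I := by
  ext m
  have h := finrank_piece hI hF hnzd m
  have hc : ∀ (J : Ideal (MvPolynomial τ K)) k,
      PowerSeries.coeff k (hseries K J) = (Module.finrank K (piece J k) : ℤ) :=
    fun J k => PowerSeries.coeff_mk _ _
  rw [sub_mul, one_mul, map_sub, t, PowerSeries.coeff_X_pow_mul', hc, hc, hc, ← h]
  split_ifs <;> push_cast <;> ring

end Hilbert

/-! ### The two binomial edge ideals -/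

section Graph

variable {K : Type} [Field K] {n : ℕ}

theorem bei_eq_relIdeal (G : SimpleGraph (Fin n)) : bei K G = relIdeal K G.Adj ∅ := by
  refine le_antisymm (Ideal.span_le.2 ?_) (relIdeal_le (by simp) (by simp) fun i j h => ?_)
  · rintro _ ⟨i, j, -, h, rfl⟩
    exact mnr_mem h
  · rcases lt_trichotomy i j with hlt | rfl | hlt
    · exact Ideal.subset_span ⟨i, j, hlt, h, rfl⟩
    · exact absurd h G.irrefl
    · rw [mnr_swap j i]
      exact neg_mem (Ideal.subset_span ⟨j, i, hlt, h.symm, rfl⟩)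

/-- Adjacency of `G`, as a relation on the enlarged vertex set `[n+1]`. -/
def liftAdj (G : SimpleGraph (Fin n)) (i j : Fin (n + 1)) : Prop :=
  ∃ a b, G.Adj a b ∧ i = Fin.castSucc a ∧ j = Fin.castSucc b

theorem liftS_mnr (i j : Fin n) : liftS K n (mnr K i j) = mnr K i.castSucc j.castSucc := by
  simp [liftS, mnr, xv, yv]

theorem map_bei (G : SimpleGraph (Fin n)) :
    Ideal.map (liftS K n) (bei K G) = relIdeal K (liftAdj G) ∅ := by
  rw [bei_eq_relIdeal]
  refine le_antisymm (Ideal.map_le_iff_le_comap.2 (relIdeal_le (by simp) (by simp) ?_))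
    (relIdeal_le (by simp) (by simp) ?_)
  · intro i j h
    rw [Ideal.mem_comap, liftS_mnr]
    exact mnr_mem ⟨i, j, h, rfl, rfl⟩
  · rintro _ _ ⟨a, b, h, rfl, rfl⟩
    rw [← liftS_mnr]
    exact Ideal.mem_map_of_mem _ (mnr_mem h)

theorem bei_extendG (G : SimpleGraph (Fin n)) (v : Fin n) :
    bei K (extendG G v) =
      relIdeal K (liftAdj G) ∅ ⊔ Ideal.span {mnr K v.castSucc (Fin.last n)} := by
  have hF : mnr K v.castSucc (Fin.last n) ∈
      relIdeal K (liftAdj G) ∅ ⊔ Ideal.span {mnr K v.castSucc (Fin.last n)} :=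
    Ideal.mem_sup_right (Ideal.mem_span_singleton_self _)
  have hA : ∀ {i j : Fin (n + 1)} (ha : i ≠ Fin.last n) (hb : j ≠ Fin.last n),
      G.Adj (i.castPred ha) (j.castPred hb) → liftAdj G i j := fun ha hb h =>
    ⟨_, _, h, (Fin.castSucc_castPred _ ha).symm, (Fin.castSucc_castPred _ hb).symm⟩
  rw [bei_eq_relIdeal]
  refine le_antisymm (relIdeal_le (by simp) (by simp) fun i j h => ?_) (sup_le ?_ ?_)
  · rw [extendG, SimpleGraph.fromRel_adj] at h
    obtain ⟨-, (⟨ha, hb, h⟩ | ⟨rfl, rfl⟩) | (⟨ha, hb, h⟩ | ⟨rfl, rfl⟩)⟩ := h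
    · exact Ideal.mem_sup_left (mnr_mem (hA ha hb h))
    · exact hF
    · rw [mnr_swap j i]
      exact Ideal.mem_sup_left (neg_mem (mnr_mem (hA ha hb h)))
    · rw [mnr_swap (Fin.castSucc v) (Fin.last n)]
      exact neg_mem hF
  · refine relIdeal_le (by simp) (by simp) ?_
    rintro _ _ ⟨a, b, h, rfl, rfl⟩
    refine mnr_mem ?_
    rw [extendG, SimpleGraph.fromRel_adj]
    exact ⟨fun he => h.ne (Fin.castSucc_injective _ he),
      Or.inl (Or.inl ⟨Fin.castSucc_ne_last a, Fin.castSucc_ne_last b, by simpa using h⟩)⟩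
  · rw [Ideal.span_le, Set.singleton_subset_iff]
    refine mnr_mem ?_
    rw [extendG, SimpleGraph.fromRel_adj]
    exact ⟨Fin.castSucc_ne_last v, Or.inl (Or.inr ⟨rfl, rfl⟩)⟩

theorem isHomogeneous_mnr {σ : Type} (i j : σ) : (mnr K i j).IsHomogeneous 2 :=
  ((isHomogeneous_X K _).mul (isHomogeneous_X K _)).sub
    ((isHomogeneous_X K _).mul (isHomogeneous_X K _))

attribute [local instance] MvPolynomial.gradedAlgebra in
theorem isHomogeneous_relIdeal {σ : Type} (E : σ → σ → Prop) :
    (relIdeal K E ∅).IsHomogeneous (homogeneousSubmodule (σ ⊕ σ) K) := by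
  refine Ideal.homogeneous_span _ _ ?_
  rintro f ((⟨v, hv, -⟩ | ⟨v, hv, -⟩) | ⟨i, j, -, rfl⟩)
  · exact hv.elim
  · exact hv.elim
  · exact ⟨2, isHomogeneous_mnr i j⟩

/-- A vertex `v` of degree one is a leaf attached to the graph obtained by deleting `v`, so `x_v`
is a nonzerodivisor by `leaf_of_mul_mem`. -/
theorem xv_of_mul_mem (G : SimpleGraph (Fin n)) (v : Fin n) (hdeg : deg G v = 1)
    {a : MvPolynomial (Fin (n + 1) ⊕ Fin (n + 1)) K}
    (ha : xv K v.castSucc * a ∈ relIdeal K (liftAdj G) ∅) : a ∈ relIdeal K (liftAdj G) ∅ := by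
  obtain ⟨m, hm⟩ : ∃ m, G.neighborSet v = {m} := Set.ncard_eq_one.1 hdeg
  have hmv : ∀ u, G.Adj v u ↔ u = m := fun u => by
    rw [← SimpleGraph.mem_neighborSet, hm, Set.mem_singleton_iff]
  have hvm : G.Adj v m := (hmv m).2 rfl
  let E : Fin (n + 1) → Fin (n + 1) → Prop := fun i j =>
    liftAdj G i j ∧ i ≠ v.castSucc ∧ j ≠ v.castSucc
  have hsplit : relIdeal K (liftAdj G) ∅ =
      Ideal.span {mnr K m.castSucc v.castSucc} ⊔ relIdeal K E ∅ := by
    have hg : mnr K m.castSucc v.castSucc ∈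
        Ideal.span {mnr K m.castSucc v.castSucc} ⊔ relIdeal K E ∅ :=
      Ideal.mem_sup_left (Ideal.mem_span_singleton_self _)
    refine le_antisymm (relIdeal_le (by simp) (by simp) ?_) (sup_le ?_ ?_)
    · rintro _ _ ⟨a, b, h, rfl, rfl⟩
      by_cases hav : a = v
      · subst hav
        obtain rfl := (hmv b).1 h
        rw [mnr_swap b.castSucc a.castSucc]
        exact neg_mem hg
      by_cases hbv : b = v
      · subst hbv
        obtain rfl := (hmv a).1 h.symm
        exact hg
      exact Ideal.mem_sup_right (mnr_mem ⟨⟨a, b, h, rfl, rfl⟩,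
        fun h => hav (Fin.castSucc_injective _ h), fun h => hbv (Fin.castSucc_injective _ h)⟩)
    · rw [Ideal.span_le, Set.singleton_subset_iff]
      exact mnr_mem ⟨m, v, hvm.symm, rfl, rfl⟩
    · exact relIdeal_mono (fun _ _ h => h.1) subset_rfl
  rw [hsplit] at ha ⊢
  refine leaf_of_mul_mem ?_ (fun h => hvm.ne (Fin.castSucc_injective _ h).symm)
    (fun i j h => h.2) ha
  rintro _ _ ⟨⟨a, b, h, rfl, rfl⟩, h1, h2⟩
  exact ⟨⟨b, a, h.symm, rfl, rfl⟩, h2, h1⟩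

end Graph

/-- Let `G` be a connected simple graph on `[n]` having a vertex of
degree `1`, labeled `n`, let `G′` be the graph on `[n+1]` obtained from `G` by
attaching the edge `{n, n+1}`, and let `S′ = K[x_1,…,x_{n+1},y_1,…,y_{n+1}]`.
Then `H(S′/J_{G′}, t) = (1 − t²) · H(S′/J_G S′, t)`. -/
theorem statement5 (K : Type) [Field K] (n : ℕ) (hn : 0 < n)
    (G : SimpleGraph (Fin n)) (hG : G.Connected)
    (hdeg : deg G ⟨n - 1, by omega⟩ = 1) :
    hseries K (bei K (extendG G ⟨n - 1, by omega⟩)) =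
      (1 - t ^ 2) * hseries K (Ideal.map (liftS K n) (bei K G)) := by
  rw [map_bei, bei_extendG]
  refine hseries_sup (isHomogeneous_relIdeal _) (isHomogeneous_mnr _ _) fun a ha =>
    mnr_of_mul_mem (Fin.castSucc_ne_last _) (isFreeOf_relIdeal ?_)
      (fun b hb => xv_of_mul_mem G _ hdeg hb) ha
  rintro _ _ ⟨a, b, -, rfl, rfl⟩
  exact ⟨Fin.castSucc_ne_last a, Fin.castSucc_ne_last b⟩

end BEIPaper
end
end

section
/- Let G be a 3-star like tree on the vertex set [n]. If G has exactly one vertex of degree 3 (first type) and n > 3, then the Hilbert series of S/J_G is H(S/J_G, t) = (1 + 2t − 2t^3)(1 + t)^{n−4} / (1 − t)^{n+2}. If G has exactly two vertices of degree 3, joined by an edge (second type), and n > 5, then H(S/J_G, t) = (1 + 4t + 5t^2 − 3t^4)(1 + t)^{n−6} / (1 − t)^{n+2}. -/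
/-!
The Hilbert series is computed by building the tree up one edge at a time. Write `G_v` (`comp G v`)
for the graph in which the neighbourhood of `v` has been completed to a clique, and
`num G = H(S/J_G, t) (1 - t)^(2n)`. Deleted vertices are kept as isolated vertices, so all ideals
live in one polynomial ring. There are two recursions.

* Pendant edges (`num_edge`). If `w` is isolated and `w ≠ v`, then `J_G : f_{vw} = J_{G_v}`
  (`colon_fb`), so `num (G + vw) = num G - t² num G_v`. In particular, if `v` is simplicial (its
  neighbourhood is a clique), the new edge multiplies the numerator by `1 - t²`.
* Ohtani's decomposition `J_G = J_{G_v} ∩ ((x_v, y_v) + J_{G - v})` (`ohtani`, `num_ohtani`), which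
  relates `num G`, `num G_v`, `num (G - v)` and `num (G_v - v)`.

The inclusion `⊇` in the colon formula is the relation
`f_{ij} x_v = x_i f_{vj} - x_j f_{vi}` (and the same for `y_v`); the inclusion `⊆` says that `f_{vw}`
is a nonzerodivisor modulo `J_{G_v}`. Nonzerodivisors are handled by `nzd_ind`: Ohtani's
decomposition at non-simplicial vertices reduces to disjoint unions of cliques, and there `J_G` is
the kernel of the map `x_i ↦ a_i s_k`, `y_i ↦ a_i r_k` (`k` the clique of `i`) to a polynomial ring.

For a star with three leaves, and for two adjacent centres with two further leaves each, the
recursions pass only through graphs built from `K₃` and `K₄`, and give the numerators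
`(1 - t)² (1 + 2t - 2t³)` (`num_claw`) and `(1 - t)⁴ (1 + 4t + 5t² - 3t⁴)` (`num_dstar`).
Rooting the tree at a vertex of degree three, every further vertex is attached, in order of
increasing distance from the root, to a vertex that has at most one neighbour at that moment and so
is simplicial (`num_grow`). The `n - 4`, respectively `n - 6`, remaining vertices each contribute a
factor `1 - t² = (1 - t)(1 + t)`.
-/

open MvPolynomial CategoryTheory Opposite

noncomputable section

namespace BEIPaper

/-! ### Binomial edge ideals and Ohtani's decomposition -/

section ideals

variable {K : Type} [Field K] {σ : Type}

/-- The binomial `f_{ij} = x_i y_j - x_j y_i`. -/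
def fb (K : Type) [Field K] {σ : Type} (i j : σ) : MvPolynomial (σ ⊕ σ) K :=
  xv K i * yv K j - xv K j * yv K i

/-- The binomial edge ideal of a graph on an arbitrary vertex set, generated by the `f_{ij}`
over all ordered pairs of adjacent vertices. -/
def JE (K : Type) [Field K] {σ : Type} (G : SimpleGraph σ) : Ideal (MvPolynomial (σ ⊕ σ) K) :=
  Ideal.span {f | ∃ i j : σ, G.Adj i j ∧ f = fb K i j}

/-- The graph `G_v`, obtained from `G` by making the neighbourhood of `v` a clique. -/
def comp (G : SimpleGraph σ) (v : σ) : SimpleGraph σ where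
  Adj i j := G.Adj i j ∨ (i ≠ j ∧ G.Adj v i ∧ G.Adj v j)
  symm := ⟨fun _ _ h => h.elim (fun h => Or.inl h.symm) (fun h => Or.inr ⟨h.1.symm, h.2.2, h.2.1⟩)⟩
  loopless := ⟨fun i h => h.elim (fun h => G.loopless.irrefl i h) (fun h => h.1 rfl)⟩

/-- The graph `G - v`. The vertex `v` is kept, as an isolated vertex, so that all ideals live in
one polynomial ring. -/
def del (G : SimpleGraph σ) (v : σ) : SimpleGraph σ where
  Adj i j := G.Adj i j ∧ i ≠ v ∧ j ≠ v
  symm := ⟨fun _ _ h => ⟨h.1.symm, h.2.2, h.2.1⟩⟩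
  loopless := ⟨fun i h => G.loopless.irrefl i h.1⟩

/-- The vertex `v` is simplicial: its neighbourhood is a clique. -/
def Simp (G : SimpleGraph σ) (v : σ) : Prop :=
  ∀ a b, G.Adj v a → G.Adj v b → a ≠ b → G.Adj a b

/-- The ideal `(x_v, y_v)`. -/
def xy (K : Type) [Field K] {σ : Type} (v : σ) : Ideal (MvPolynomial (σ ⊕ σ) K) :=
  Ideal.span {xv K v, yv K v}

open Classical in
/-- The substitution `x_v = y_v = 0`. -/
def rho (K : Type) [Field K] {σ : Type} (v : σ) :
    MvPolynomial (σ ⊕ σ) K →ₐ[K] MvPolynomial (σ ⊕ σ) K :=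
  aeval (fun s => if s = Sum.inl v ∨ s = Sum.inr v then 0 else X s)

lemma rho_xv_self (v : σ) : rho K v (xv K v) = 0 := by simp [rho, xv]
lemma rho_yv_self (v : σ) : rho K v (yv K v) = 0 := by simp [rho, yv]
lemma rho_xv (v i : σ) (h : i ≠ v) : rho K v (xv K i) = xv K i := by simp [rho, xv, h]
lemma rho_yv (v i : σ) (h : i ≠ v) : rho K v (yv K i) = yv K i := by simp [rho, yv, h]

lemma fb_mem {G : SimpleGraph σ} {i j : σ} (h : G.Adj i j) : fb K i j ∈ JE K G :=
  Ideal.subset_span ⟨i, j, h, rfl⟩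

lemma xv_mem_xy (v : σ) : xv K v ∈ xy K v := Ideal.subset_span (by simp)
lemma yv_mem_xy (v : σ) : yv K v ∈ xy K v := Ideal.subset_span (by simp)

lemma JE_mono {G H : SimpleGraph σ} (h : G ≤ H) : JE K G ≤ JE K H := by
  refine Ideal.span_mono ?_
  rintro f ⟨i, j, hij, rfl⟩
  exact ⟨i, j, h hij, rfl⟩

lemma le_comp (G : SimpleGraph σ) (v : σ) : G ≤ comp G v := fun _ _ h => Or.inl h
lemma del_le (G : SimpleGraph σ) (v : σ) : del G v ≤ G := fun _ _ h => h.1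

lemma comp_eq_of_simp {G : SimpleGraph σ} {v : σ} (h : Simp G v) : comp G v = G := by
  ext i j
  exact ⟨fun hij => hij.elim id (fun hij => h i j hij.2.1 hij.2.2 hij.1), Or.inl⟩

lemma sub_rho_mem (v : σ) (p : MvPolynomial (σ ⊕ σ) K) : p - rho K v p ∈ xy K v := by
  induction p using MvPolynomial.induction_on with
  | C a => simp [rho]
  | add p q hp hq =>
    have : p + q - rho K v (p + q) = (p - rho K v p) + (q - rho K v q) := by
      rw [map_add]; ring
    rw [this]; exact add_mem hp hq
  | mul_X p s hp =>
    have hs : X s - rho K v (X s) ∈ xy K v := by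
      by_cases h : s = Sum.inl v ∨ s = Sum.inr v
      · have : rho K v (X s) = 0 := by simp [rho, h]
        rw [this, sub_zero]
        rcases h with rfl | rfl
        · exact xv_mem_xy v
        · exact yv_mem_xy v
      · have : rho K v (X s) = X s := by simp [rho, h]
        simp [this]
    have : p * X s - rho K v (p * X s) =
        X s * (p - rho K v p) + rho K v p * (X s - rho K v (X s)) := by
      rw [map_mul]; ring
    rw [this]
    exact add_mem (Ideal.mul_mem_left _ _ hp) (Ideal.mul_mem_left _ _ hs)

lemma map_mem_of_span {R R' : Type} [CommRing R] [CommRing R'] {s : Set R} {I : Ideal R'}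
    (φ : R →+* R')
    (h : ∀ f ∈ s, φ f ∈ I) {p : R} (hp : p ∈ Ideal.span s) : φ p ∈ I := by
  have : Ideal.span s ≤ I.comap φ := Ideal.span_le.2 h
  exact this hp

lemma rho_mem_del {G : SimpleGraph σ} (v : σ) {p : MvPolynomial (σ ⊕ σ) K} (hp : p ∈ JE K G) :
    rho K v p ∈ JE K (del G v) := by
  refine map_mem_of_span (rho K v).toRingHom ?_ hp
  rintro f ⟨i, j, hij, rfl⟩
  change rho K v (fb K i j) ∈ _
  by_cases hi : i = v
  · subst hi; simp [fb, rho_xv_self, rho_yv_self]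
  by_cases hj : j = v
  · subst hj; simp [fb, rho_xv_self, rho_yv_self]
  have : rho K v (fb K i j) = fb K i j := by
    simp [fb, rho_xv, rho_yv, hi, hj]
  rw [this]
  exact fb_mem ⟨hij, hi, hj⟩

lemma rho_xy {v : σ} {p : MvPolynomial (σ ⊕ σ) K} (hp : p ∈ xy K v) : rho K v p = 0 := by
  have := map_mem_of_span (I := ⊥) (rho K v).toRingHom ?_ hp
  · simpa using this
  · rintro f (rfl | rfl)
    · exact rho_xv_self v
    · exact rho_yv_self v

lemma del_del (G : SimpleGraph σ) (v : σ) : del (del G v) v = del G v := by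
  ext i j; simp [del]

/-- Membership in `(x_v, y_v) + J_{G-v}` is tested by setting `x_v = y_v = 0`. -/
lemma mem_xy_sup_iff {G : SimpleGraph σ} {v : σ} {p : MvPolynomial (σ ⊕ σ) K} :
    p ∈ xy K v ⊔ JE K (del G v) ↔ rho K v p ∈ JE K (del G v) := by
  constructor
  · intro h
    obtain ⟨a, ha, b, hb, rfl⟩ := Submodule.mem_sup.1 h
    rw [map_add, rho_xy ha, zero_add]
    have := rho_mem_del v hb
    rwa [del_del] at this
  · intro h
    have : p = (p - rho K v p) + rho K v p := by ring
    rw [this]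
    exact Submodule.add_mem_sup (sub_rho_mem v p) h

/-- `(x_v, y_v) · J_{G_v} ⊆ J_G`, by the three-term Plücker-type relation between the columns
`v, i, j`. -/
lemma mul_mem_of_comp {G : SimpleGraph σ} {v : σ} {p q : MvPolynomial (σ ⊕ σ) K}
    (hp : p ∈ JE K (comp G v)) (hq : q ∈ xy K v) : q * p ∈ JE K G := by
  have key : JE K (comp G v) * xy K v ≤ JE K G := by
    rw [JE, xy, Ideal.span_mul_span', Ideal.span_le]
    rintro _ ⟨_, ⟨i, j, hij, rfl⟩, q, hq, rfl⟩
    rcases hij with hij | ⟨hne, hi, hj⟩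
    · exact Ideal.mul_mem_right _ _ (fb_mem hij)
    · rcases hq with rfl | rfl
      · have : fb K i j * xv K v = xv K i * fb K v j - xv K j * fb K v i := by
          simp only [fb]; ring
        change fb K i j * xv K v ∈ _
        rw [this]
        exact sub_mem (Ideal.mul_mem_left _ _ (fb_mem hj)) (Ideal.mul_mem_left _ _ (fb_mem hi))
      · have : fb K i j * yv K v = yv K i * fb K v j - yv K j * fb K v i := by
          simp only [fb]; ring
        change fb K i j * yv K v ∈ _
        rw [this]
        exact sub_mem (Ideal.mul_mem_left _ _ (fb_mem hj)) (Ideal.mul_mem_left _ _ (fb_mem hi))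
  rw [mul_comm]
  exact key (Ideal.mul_mem_mul hp hq)

/-- The part of an element of `J_{G_v}` that vanishes under `x_v = y_v = 0` already lies
in `J_G`. -/
lemma sub_rho_mem_of_comp {G : SimpleGraph σ} {v : σ} {p : MvPolynomial (σ ⊕ σ) K}
    (hp : p ∈ JE K (comp G v)) : p - rho K v p ∈ JE K G := by
  unfold JE at hp
  induction hp using Submodule.span_induction with
  | mem f hf =>
    obtain ⟨i, j, hij, rfl⟩ := hf
    rcases hij with hij | ⟨hne, hi, hj⟩
    · exact sub_mem (fb_mem hij) (JE_mono (del_le G v) (rho_mem_del v (fb_mem hij)))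
    · have : rho K v (fb K i j) = fb K i j := by
        simp [fb, rho_xv, rho_yv, hi.ne', hj.ne']
      simp [this]
  | zero => simp
  | add p q hp hq ihp ihq =>
    have : p + q - rho K v (p + q) = (p - rho K v p) + (q - rho K v q) := by
      rw [map_add]; ring
    rw [this]; exact add_mem ihp ihq
  | smul a p hp ih =>
    have : a • p - rho K v (a • p) = a * (p - rho K v p) + (a - rho K v a) * rho K v p := by
      rw [smul_eq_mul, map_mul]; ring
    rw [this]
    exact add_mem (Ideal.mul_mem_left _ _ ih)
      (mul_mem_of_comp (JE_mono (del_le _ _) (rho_mem_del v hp)) (sub_rho_mem v a))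

lemma del_mono {G H : SimpleGraph σ} (h : G ≤ H) (v : σ) : del G v ≤ del H v :=
  fun _ _ hij => ⟨h hij.1, hij.2⟩

/-- Ohtani's decomposition `J_G = J_{G_v} ∩ ((x_v, y_v) + J_{G-v})`. -/
lemma ohtani (G : SimpleGraph σ) (v : σ) :
    JE K (comp G v) ⊓ (xy K v ⊔ JE K (del G v)) = JE K G := by
  apply le_antisymm
  · rintro p ⟨h1, h2⟩
    have h2' := JE_mono (del_le G v) (mem_xy_sup_iff.1 h2)
    have : p = (p - rho K v p) + rho K v p := by ring
    rw [this]
    exact add_mem (sub_rho_mem_of_comp h1) h2'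
  · refine le_inf (JE_mono (le_comp G v)) fun p hp => ?_
    exact mem_xy_sup_iff.2 (rho_mem_del v hp)

lemma ohtani_sup (G : SimpleGraph σ) (v : σ) :
    JE K (comp G v) ⊔ (xy K v ⊔ JE K (del G v)) = xy K v ⊔ JE K (del (comp G v) v) := by
  apply le_antisymm
  · refine sup_le (fun p hp => mem_xy_sup_iff.2 (rho_mem_del v hp)) (sup_le le_sup_left ?_)
    exact le_sup_of_le_right (JE_mono (del_mono (le_comp G v) v))
  · exact sup_le (le_sup_of_le_right le_sup_left) (le_sup_of_le_left (JE_mono (del_le _ _)))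

lemma comp_simp {G : SimpleGraph σ} {u v : σ} (h : Simp G v) : Simp (comp G u) v := by
  have aux : ∀ a b, G.Adj v a → G.Adj u v → G.Adj u b → a ≠ b → (comp G u).Adj a b := by
    intro a b hva huv hub hab
    by_cases hau : u = a
    · subst hau; exact Or.inl hub
    · exact Or.inr ⟨hab, h u a huv.symm hva hau, hub⟩
  rintro a b (ha | ⟨-, huv, hua⟩) (hb | ⟨-, huv', hub⟩) hab
  · exact Or.inl (h a b ha hb hab)
  · exact aux a b ha huv' hub hab
  · exact (aux b a hb huv hua hab.symm).symm
  · exact Or.inr ⟨hab, hua, hub⟩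

lemma comp_simp_self (G : SimpleGraph σ) (v : σ) : Simp (comp G v) v := by
  have aux : ∀ a, (comp G v).Adj v a → G.Adj v a := by
    rintro a (h | h)
    · exact h
    · exact (G.loopless.irrefl v h.2.1).elim
  exact fun a b ha hb hab => Or.inr ⟨hab, aux a ha, aux b hb⟩

lemma del_simp {G : SimpleGraph σ} {u v : σ} (h : Simp G v) : Simp (del G u) v :=
  fun a b ha hb hab => ⟨h a b ha.1 hb.1 hab, ha.2.2, hb.2.2⟩

lemma del_simp_self (G : SimpleGraph σ) (v : σ) : Simp (del G v) v :=
  fun _ _ ha => (ha.2.1 rfl).elim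

/-- The vertex `v` is isolated. -/
def Iso (G : SimpleGraph σ) (v : σ) : Prop := ∀ u, ¬ G.Adj v u

lemma Iso.simp {G : SimpleGraph σ} {v : σ} (h : Iso G v) : Simp G v :=
  fun a _ ha => (h a ha).elim

lemma Iso.comp {G : SimpleGraph σ} {v : σ} (h : Iso G v) (u : σ) : Iso (comp G u) v := by
  rintro a (ha | ha)
  · exact h a ha
  · exact h u ha.2.1.symm

lemma Iso.del {G : SimpleGraph σ} {v : σ} (h : Iso G v) (u : σ) : Iso (del G u) v :=
  fun a ha => h a ha.1

lemma Iso.del_eq {G : SimpleGraph σ} {v : σ} (h : Iso G v) : BEIPaper.del G v = G := by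
  ext i j
  refine ⟨fun h => h.1, fun hij => ⟨hij, ?_, ?_⟩⟩
  · rintro rfl; exact h _ hij
  · rintro rfl; exact h _ hij.symm

end ideals

/-! ### Nonzerodivisors and the colon ideal of a pendant edge -/

section toric

variable {K : Type} [Field K] {σ : Type} {C : Type}

/-- The exponent vector of the image of a variable under the toric map `phi`. -/
def ex (c : σ → C) : σ ⊕ σ → (σ ⊕ (C ⊕ C) →₀ ℕ)
  | Sum.inl i => Finsupp.single (Sum.inl i) 1 + Finsupp.single (Sum.inr (Sum.inl (c i))) 1
  | Sum.inr i => Finsupp.single (Sum.inl i) 1 + Finsupp.single (Sum.inr (Sum.inr (c i))) 1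

/-- The toric map `x_i ↦ a_i s_{c(i)}`, `y_i ↦ a_i r_{c(i)}` attached to a partition of the
vertices into the fibres of `c`. -/
def phi (K : Type) [Field K] (c : σ → C) :
    MvPolynomial (σ ⊕ σ) K →ₐ[K] MvPolynomial (σ ⊕ (C ⊕ C)) K :=
  aeval fun s => monomial (ex c s) 1

variable [Fintype σ]

/-- The action of `phi` on exponent vectors. -/
def th (c : σ → C) (m : σ ⊕ σ →₀ ℕ) : σ ⊕ (C ⊕ C) →₀ ℕ := ∑ s, m s • ex c s

lemma th_add (c : σ → C) (m m' : σ ⊕ σ →₀ ℕ) : th c (m + m') = th c m + th c m' := by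
  simp [th, add_smul, Finset.sum_add_distrib]

lemma th_single (c : σ → C) (s : σ ⊕ σ) : th c (Finsupp.single s 1) = ex c s := by
  classical
  simp [th, Finsupp.single_apply]

lemma phi_monomial (c : σ → C) (m : σ ⊕ σ →₀ ℕ) (a : K) :
    phi K c (monomial m a) = monomial (th c m) a := by
  rw [phi, aeval_monomial, th, monomial_sum_index, Finsupp.prod_fintype]
  · simp [monomial_pow, algebraMap_eq]
  · simp

lemma th_inl (c : σ → C) (m : σ ⊕ σ →₀ ℕ) (i : σ) :
    th c m (Sum.inl i) = m (Sum.inl i) + m (Sum.inr i) := by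
  classical
  simp [th, ex, Finsupp.single_apply]

open Classical in
lemma th_inr (c : σ → C) (m : σ ⊕ σ →₀ ℕ) (k : C) :
    th c m (Sum.inr (Sum.inl k)) = ∑ i with c i = k, m (Sum.inl i) := by
  simp [th, ex, Finsupp.single_apply, Finset.sum_filter]

/-- If every fibre of `c` is a clique of `G`, two monomials with the same image under the toric map
are congruent modulo `J_G`: factors `x_i y_j` with `c i = c j` are traded for `x_j y_i` until the
two `x`-parts agree. The induction is on the excess `N` of the first `x`-part over the second. -/
lemma straighten (G : SimpleGraph σ) (c : σ → C) (hc : ∀ i j, c i = c j → i ≠ j → G.Adj i j)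
    (N : ℕ) : ∀ m m' : σ ⊕ σ →₀ ℕ, ∑ i, (m (Sum.inl i) - m' (Sum.inl i)) = N →
      th c m = th c m' → monomial m (1 : K) - monomial m' 1 ∈ JE K G := by
  classical
  induction N using Nat.strong_induction_on with
  | _ N ih =>
  intro m m' hN hth
  have hl (i : σ) : m (Sum.inl i) + m (Sum.inr i) = m' (Sum.inl i) + m' (Sum.inr i) := by
    rw [← th_inl c, ← th_inl c, hth]
  have hr (k : C) : ∑ i with c i = k, m (Sum.inl i) = ∑ i with c i = k, m' (Sum.inl i) := by
    rw [← th_inr, ← th_inr, hth]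
  by_cases hle : ∀ i, m (Sum.inl i) ≤ m' (Sum.inl i)
  · have heq : ∀ i, m (Sum.inl i) = m' (Sum.inl i) := by
      intro i
      exact (Finset.sum_eq_sum_iff_of_le (fun j _ => hle j)).1 (hr (c i)) i (by simp)
    have : m = m' := by
      ext s
      rcases s with i | i
      · exact heq i
      · have := hl i
        have := heq i
        omega
    simp [this]
  · push Not at hle
    obtain ⟨i, hi⟩ := hle
    obtain ⟨j, hj, hlt⟩ : ∃ j, c j = c i ∧ m (Sum.inl j) < m' (Sum.inl j) := by
      by_contra! hcon
      have := Finset.sum_lt_sum (s := Finset.univ.filter fun j => c j = c i)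
        (f := fun j => m' (Sum.inl j)) (g := fun j => m (Sum.inl j))
        (fun j hj => hcon j (by simpa using hj)) ⟨i, by simp, hi⟩
      have := hr (c i)
      omega
    have hij : i ≠ j := by rintro rfl; omega
    obtain ⟨m0, hm0⟩ : ∃ m0, m = m0 + (Finsupp.single (Sum.inl i) 1 +
        Finsupp.single (Sum.inr j) 1) := by
      refine ⟨m - (Finsupp.single (Sum.inl i) 1 + Finsupp.single (Sum.inr j) 1),
        (tsub_add_cancel_of_le ?_).symm⟩
      intro s
      rcases s with k | k
      · by_cases hk : i = k
        · subst hk; simp; omega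
        · simp [hk]
      · by_cases hk : j = k
        · subst hk; simp; have := hl j; omega
        · simp [hk]
    set m'' := m0 + (Finsupp.single (Sum.inl j) 1 + Finsupp.single (Sum.inr i) 1) with hm''
    have hth' : th c m'' = th c m' := by
      rw [← hth, hm0, hm'']
      simp only [th_add, th_single, ex, hj]
      abel
    have hdiff : monomial m (1 : K) - monomial m'' 1 ∈ JE K G := by
      have : monomial m (1 : K) - monomial m'' 1 = monomial m0 1 * fb K i j := by
        rw [hm0, hm'']
        simp only [fb, xv, yv, X, mul_sub, monomial_mul, mul_one]
      rw [this]
      exact Ideal.mul_mem_left _ _ (fb_mem (hc i j hj.symm hij))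
    have e1 (k : σ) : m (Sum.inl k) = m0 (Sum.inl k) + if i = k then 1 else 0 := by
      rw [hm0]; simp [Finsupp.single_apply]
    have e2 (k : σ) : m'' (Sum.inl k) = m0 (Sum.inl k) + if j = k then 1 else 0 := by
      rw [hm'']; simp [Finsupp.single_apply]
    have hlt' : ∑ k, (m'' (Sum.inl k) - m' (Sum.inl k)) < N := by
      rw [← hN]
      refine Finset.sum_lt_sum (fun k _ => ?_) ⟨i, Finset.mem_univ _, ?_⟩
      · have h1 := e1 k
        have h2 := e2 k
        by_cases hk : j = k
        · subst hk; simp only [hij, if_true, if_false] at h1 h2; omega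
        · simp only [hk, if_false] at h2; split_ifs at h1 <;> omega
      · have h1 := e1 i
        have h2 := e2 i
        simp only [hij.symm, if_true, if_false] at h1 h2
        omega
    have := add_mem hdiff (ih _ hlt' m'' m' rfl hth')
    simpa using this

/-- If every fibre of `c` is a clique of `G`, then `J_G` contains the kernel of the toric map. -/
lemma mem_of_phi (G : SimpleGraph σ) (c : σ → C) (hc : ∀ i j, c i = c j → i ≠ j → G.Adj i j)
    {p : MvPolynomial (σ ⊕ σ) K} (hp : phi K c p = 0) : p ∈ JE K G := by
  -- `L` sends each monomial in the image of `phi` to one of its monomial preimages.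
  let L : MvPolynomial (σ ⊕ (C ⊕ C)) K →ₗ[K] MvPolynomial (σ ⊕ σ) K :=
    (basisMonomials _ K).constr K fun m => monomial (Function.invFun (th c) m) 1
  have hL (m) : L (monomial m 1) = monomial (Function.invFun (th c) m) 1 := by
    have := (basisMonomials (σ ⊕ (C ⊕ C)) K).constr_basis K
      (fun m => monomial (Function.invFun (th c) m) (1 : K)) m
    simpa using this
  have key (q : MvPolynomial (σ ⊕ σ) K) : q - L (phi K c q) ∈ JE K G := by
    induction q using MvPolynomial.induction_on' with
    | monomial m a =>
      have h1 : monomial m a = a • monomial m (1 : K) := by simp [smul_monomial]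
      have h2 : L (phi K c (monomial m a)) =
          a • monomial (Function.invFun (th c) (th c m)) (1 : K) := by
        rw [h1, map_smul, map_smul, phi_monomial, hL]
      rw [h2, h1, ← smul_sub, smul_eq_C_mul]
      exact Ideal.mul_mem_left _ _
        (straighten G c hc _ _ _ rfl (Function.invFun_eq ⟨m, rfl⟩).symm)
    | add p q hp hq =>
      rw [map_add, map_add, add_sub_add_comm]
      exact add_mem hp hq
  simpa [hp] using key p

/-- A criterion for a polynomial `p` to be a nonzerodivisor modulo `J_G`. Ohtani's decomposition at
a non-simplicial vertex reduces the claim to graphs with fewer non-simplicial vertices, and a graph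
all of whose vertices are simplicial is a disjoint union of cliques, where `J_G` is the kernel of
the toric map to a domain. The property `Q` of the graph is what makes this recursion run. -/
lemma nzd_ind (p : MvPolynomial (σ ⊕ σ) K) (Q : SimpleGraph σ → Prop)
    (hcomp : ∀ G u, Q G → ¬ Simp G u → Q (comp G u))
    (hdel : ∀ G u, Q G → ¬ Simp G u → Q (del G u))
    (hrho : ∀ G u, Q G → ¬ Simp G u → rho K u p = p)
    (hbase : ∀ (G : SimpleGraph σ) (C : Type) (c : σ → C), Q G →
      (∀ i j, c i = c j ↔ i = j ∨ G.Adj i j) → phi K c p ≠ 0) (G : SimpleGraph σ) (hQ : Q G)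
    (g : MvPolynomial (σ ⊕ σ) K) (hg : p * g ∈ JE K G) : g ∈ JE K G := by
  classical
  induction hN : (Finset.univ.filter fun v => ¬ Simp G v).card using Nat.strong_induction_on
    generalizing G g with
  | _ N ih =>
  by_cases hall : ∀ v, Simp G v
  · let st : Setoid σ :=
      { r := fun i j => i = j ∨ G.Adj i j
        iseqv :=
          { refl := fun i => Or.inl rfl
            symm := fun h => h.elim (fun h => Or.inl h.symm) (fun h => Or.inr h.symm)
            trans := by
              rintro i j k (rfl | hij) (rfl | hjk)
              · exact Or.inl rfl
              · exact Or.inr hjk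
              · exact Or.inr hij
              · by_cases hik : i = k
                · exact Or.inl hik
                · exact Or.inr (hall j i k hij.symm hjk hik) } }
    have hc (i j : σ) : (Quotient.mk st i = Quotient.mk st j) ↔ i = j ∨ G.Adj i j :=
      Quotient.eq (r := st)
    have hp := hbase G _ (Quotient.mk st) hQ hc
    have h0 : ∀ q ∈ JE K G, phi K (Quotient.mk st) q = 0 := by
      intro q hq
      have := map_mem_of_span (I := ⊥) (phi K (Quotient.mk st)).toRingHom ?_ hq
      · simpa using this
      · rintro f ⟨i, j, hij, rfl⟩
        have hcij := (hc i j).2 (Or.inr hij)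
        change phi K (Quotient.mk st) _ = 0
        simp only [phi, fb, xv, yv, map_sub, map_mul, aeval_X, ex, hcij, monomial_mul]
        rw [sub_eq_zero]
        congr 1
        rw [add_add_add_comm, add_comm (Finsupp.single (Sum.inl i) 1), ← add_add_add_comm]
    have hz := h0 _ hg
    rw [map_mul] at hz
    exact mem_of_phi G _ (fun i j h hne => ((hc i j).1 h).resolve_left hne)
      ((mul_eq_zero.1 hz).resolve_left hp)
  · push Not at hall
    obtain ⟨u, hu⟩ := hall
    have hcard (H : SimpleGraph σ) (h1 : ∀ v, Simp G v → Simp H v) (h2 : Simp H u) :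
        (Finset.univ.filter fun v => ¬ Simp H v).card < N := by
      rw [← hN]
      refine Finset.card_lt_card ⟨fun v hv => ?_, fun hs => ?_⟩
      · simp only [Finset.mem_filter, Finset.mem_univ, true_and] at hv ⊢
        exact fun h => hv (h1 v h)
      · have := hs (show u ∈ Finset.univ.filter fun v => ¬ Simp G v by simpa using hu)
        simp only [Finset.mem_filter, Finset.mem_univ, true_and] at this
        exact this h2
    rw [← ohtani G u] at hg ⊢
    refine ⟨ih _ (hcard _ (fun v => comp_simp) (comp_simp_self G u)) _ (hcomp G u hQ hu) _ hg.1 rfl,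
      ?_⟩
    have h2 := mem_xy_sup_iff.1 hg.2
    rw [map_mul, hrho G u hQ hu] at h2
    exact mem_xy_sup_iff.2
      (ih _ (hcard _ (fun v => del_simp) (del_simp_self G u)) _ (hdel G u hQ hu) _ h2 rfl)

lemma nzd_xv {G : SimpleGraph σ} {v : σ} (h : Iso G v) (g : MvPolynomial (σ ⊕ σ) K)
    (hg : xv K v * g ∈ JE K G) : g ∈ JE K G := by
  refine nzd_ind (xv K v) (fun G => Iso G v) (fun G u h _ => h.comp u) (fun G u h _ => h.del u)
    (fun G u h hu => rho_xv u v ?_) (fun G C c _ _ => ?_) G h g hg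
  · rintro rfl; exact hu h.simp
  · simp [phi, xv]

lemma nzd_yv {G : SimpleGraph σ} {v : σ} (h : Iso G v) (g : MvPolynomial (σ ⊕ σ) K)
    (hg : yv K v * g ∈ JE K G) : g ∈ JE K G := by
  refine nzd_ind (yv K v) (fun G => Iso G v) (fun G u h _ => h.comp u) (fun G u h _ => h.del u)
    (fun G u h hu => rho_yv u v ?_) (fun G C c _ _ => ?_) G h g hg
  · rintro rfl; exact hu h.simp
  · simp [phi, yv]

/-- For `v` simplicial and `w ≠ v` isolated, `v` and `w` stay in different cliques throughout the
recursion, so `f_{vw}` never dies under the toric maps and is a nonzerodivisor modulo `J_G`. -/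
lemma nzd_fb {G : SimpleGraph σ} {v w : σ} (hvw : v ≠ w) (hv : Simp G v) (hw : Iso G w)
    (g : MvPolynomial (σ ⊕ σ) K) (hg : fb K v w * g ∈ JE K G) : g ∈ JE K G := by
  classical
  refine nzd_ind (fb K v w) (fun G => Simp G v ∧ Iso G w)
    (fun G u h _ => ⟨comp_simp h.1, h.2.comp u⟩) (fun G u h _ => ⟨del_simp h.1, h.2.del u⟩)
    (fun G u h hu => ?_) (fun G C c h hc => ?_) G ⟨hv, hw⟩ g hg
  · have h1 : v ≠ u := by rintro rfl; exact hu h.1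
    have h2 : w ≠ u := by rintro rfl; exact hu h.2.simp
    simp [fb, rho_xv, rho_yv, h1, h2]
  · have hcvw : c v ≠ c w := by
      intro hcon
      rcases (hc v w).1 hcon with heq | hadj
      · exact hvw heq
      · exact h.2 v hadj.symm
    -- The evaluation `a ↦ 1`, `s_{c(v)} ↦ 1`, `r_{c(w)} ↦ 1`, all else `↦ 0` sends it to `1`.
    intro h0
    have := congrArg (MvPolynomial.eval (fun s : σ ⊕ (C ⊕ C) => match s with
      | Sum.inl _ => (1 : K)
      | Sum.inr (Sum.inl k) => if k = c v then 1 else 0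
      | Sum.inr (Sum.inr k) => if k = c w then 1 else 0)) h0
    simp [phi, fb, xv, yv, ex, eval_monomial, Finsupp.prod_add_index', pow_add, hcvw,
      hcvw.symm] at this

/-- Colon ideals by a pendant binomial: `J_G : f_{vw} = J_{G_v}` for an isolated vertex `w ≠ v`. -/
lemma colon_fb {G : SimpleGraph σ} {v w : σ} (hvw : v ≠ w) (hw : Iso G w)
    (g : MvPolynomial (σ ⊕ σ) K) : fb K v w * g ∈ JE K G ↔ g ∈ JE K (comp G v) := by
  constructor
  · intro h
    exact nzd_fb hvw (comp_simp_self G v) (hw.comp v) g (JE_mono (le_comp G v) h)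
  · intro h
    refine mul_mem_of_comp h (sub_mem ?_ ?_)
    · exact Ideal.mul_mem_right _ _ (xv_mem_xy v)
    · exact Ideal.mul_mem_left _ _ (yv_mem_xy v)

end toric

/-! ### Hilbert series of graded quotients -/

section hilbert

variable {K : Type} [Field K]

lemma finrank_map_add {V W : Type} [AddCommGroup V] [Module K V] [AddCommGroup W] [Module K W]
    (L : V →ₗ[K] W) (P : Submodule K V) [Module.Finite K P] :
    Module.finrank K (P.map L) + Module.finrank K (P ⊓ LinearMap.ker L : Submodule K V) =
      Module.finrank K P := by
  have h := (L.domRestrict P).finrank_range_add_finrank_ker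
  rw [LinearMap.range_domRestrict, LinearMap.ker_domRestrict] at h
  rw [← h, ← Submodule.map_comap_subtype, Submodule.finrank_map_subtype_eq]

variable {τ : Type}

/-- The value at `m` of the Hilbert function of `S/I`. -/
def hf (I : Ideal (MvPolynomial τ K)) (m : ℕ) : ℕ :=
  Module.finrank K (Submodule.map (Ideal.Quotient.mkₐ K I).toLinearMap
      (homogeneousSubmodule τ K m))

lemma coeff_hseries (I : Ideal (MvPolynomial τ K)) (m : ℕ) :
    PowerSeries.coeff m (hseries K I) = (hf I m : ℤ) := by
  simp [hseries, hf]

lemma ker_mk (I : Ideal (MvPolynomial τ K)) :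
    LinearMap.ker (Ideal.Quotient.mkₐ K I).toLinearMap = I.restrictScalars K := by
  ext p
  simp [Ideal.Quotient.eq_zero_iff_mem]

/-- The ideal `I` is homogeneous for the standard grading: it contains the homogeneous components
of its elements. -/
def Hom (I : Ideal (MvPolynomial τ K)) : Prop := ∀ p ∈ I, ∀ m, homogeneousComponent m p ∈ I

attribute [local instance] MvPolynomial.gradedAlgebra

lemma hom_span (s : Set (MvPolynomial τ K)) (h : ∀ f ∈ s, ∃ d, f.IsHomogeneous d) :
    Hom (Ideal.span s) := by
  intro p hp m
  refine homogeneousComponent_mem_of_mem (Ideal.homogeneous_span _ s ?_) hp m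
  intro f hf
  obtain ⟨d, hd⟩ := h f hf
  exact ⟨d, hd⟩

lemma Hom.sup {I J : Ideal (MvPolynomial τ K)} (hI : Hom I) (hJ : Hom J) : Hom (I ⊔ J) := by
  intro p hp m
  obtain ⟨a, ha, b, hb, rfl⟩ := Submodule.mem_sup.1 hp
  rw [map_add]
  exact Submodule.add_mem_sup (hI a ha m) (hJ b hb m)

lemma homogeneousComponent_mul_left {f : MvPolynomial τ K} {d : ℕ} (hf : f.IsHomogeneous d)
    (g : MvPolynomial τ K) (m : ℕ) : homogeneousComponent m (f * g) =
      if d ≤ m then f * homogeneousComponent (m - d) g else 0 := by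
  have := DirectSum.coe_decompose_mul_of_left_mem (𝒜 := homogeneousSubmodule τ K) m
    (b := g) (i := d) (a := f) hf
  have e (q : MvPolynomial τ K) (k : ℕ) :
      (DirectSum.decompose (homogeneousSubmodule τ K) q k : MvPolynomial τ K) =
        homogeneousComponent k q := decomposition.decompose'_apply q k
  rwa [e, e] at this

variable [Fintype τ]

instance finite_homogeneous (m : ℕ) : Module.Finite K (homogeneousSubmodule τ K m) :=
  Module.Finite.iff_fg.2 (homogeneousSubmodule_fg τ K m)

/-- `dim (S/I)_m + dim I_m = dim S_m`. -/
lemma hf_add (I : Ideal (MvPolynomial τ K)) (m : ℕ) :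
    hf I m + Module.finrank K (homogeneousSubmodule τ K m ⊓ I.restrictScalars K :
      Submodule K (MvPolynomial τ K)) = Module.finrank K (homogeneousSubmodule τ K m) := by
  have := finrank_map_add (Ideal.Quotient.mkₐ K I).toLinearMap (homogeneousSubmodule τ K m)
  rwa [ker_mk] at this

/-- Hilbert series along `0 → S/(J : f)(-d) → S/J → S/(J + (f)) → 0`. The ideal `I` is the
colon ideal `J : f`. -/
lemma hs_colon {J I : Ideal (MvPolynomial τ K)} (hJ : Hom J) {f : MvPolynomial τ K} {d : ℕ}
    (hf : f.IsHomogeneous d) (hI : ∀ g, f * g ∈ J ↔ g ∈ I) :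
    hseries K J = hseries K (J ⊔ Ideal.span {f}) + t ^ d * hseries K I := by
  ext m
  rw [map_add, t, mul_comm, PowerSeries.coeff_mul_X_pow', coeff_hseries, coeff_hseries]
  have h1 := hf_add J m
  have h2 := hf_add (J ⊔ Ideal.span {f}) m
  have hmem (p : MvPolynomial τ K) (hp : p.IsHomogeneous m) (hpJ : p ∈ J ⊔ Ideal.span {f}) :
      ∃ a ∈ J, ∃ g, p = a + (if d ≤ m then f * homogeneousComponent (m - d) g else 0) := by
    obtain ⟨a, ha, b, hb, rfl⟩ := Submodule.mem_sup.1 hpJ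
    obtain ⟨g, rfl⟩ := Ideal.mem_span_singleton'.1 hb
    refine ⟨_, hJ a ha m, g, ?_⟩
    rw [← homogeneousComponent_mul_left hf, ← map_add, mul_comm f g,
      homogeneousComponent_of_mem hp, if_pos rfl]
  let mkJ := (Ideal.Quotient.mkₐ K J).toLinearMap
  let P := homogeneousSubmodule τ K m ⊓ (J ⊔ Ideal.span {f}).restrictScalars K
  have hPJ : P ⊓ LinearMap.ker mkJ = homogeneousSubmodule τ K m ⊓ J.restrictScalars K := by
    rw [ker_mk, inf_assoc]
    congr 1
    exact inf_eq_right.2 (le_sup_left (a := J) (b := Ideal.span {f}))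
  have : Module.Finite K P := Submodule.finiteDimensional_of_le inf_le_left
  have h3 := finrank_map_add mkJ P
  rw [hPJ] at h3
  change BEIPaper.hf _ m + Module.finrank K P = _ at h2
  split_ifs with hd
  · rw [coeff_hseries]
    let L := mkJ ∘ₗ LinearMap.mulLeft K f
    have h4 := hf_add I (m - d)
    have h5 := finrank_map_add L (homogeneousSubmodule τ K (m - d))
    have hker : LinearMap.ker L = I.restrictScalars K := by
      ext g
      rw [LinearMap.mem_ker, Submodule.restrictScalars_mem, ← hI g]
      exact Ideal.Quotient.eq_zero_iff_mem
    -- In degree `m` the image of `(f)` in `S/J` is `f · S_{m-d}`.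
    have hmap : P.map mkJ = (homogeneousSubmodule τ K (m - d)).map L := by
      apply le_antisymm
      · rintro _ ⟨p, ⟨hp1, hp2⟩, rfl⟩
        obtain ⟨a, ha, g, hg⟩ := hmem p hp1 hp2
        rw [if_pos hd] at hg
        refine ⟨homogeneousComponent (m - d) g, homogeneousComponent_isHomogeneous _ _, ?_⟩
        have : mkJ a = 0 := by simpa [mkJ, Ideal.Quotient.eq_zero_iff_mem] using ha
        rw [hg, map_add, this, zero_add]
        rfl
      · rintro _ ⟨g, hg, rfl⟩
        refine ⟨f * g, ⟨?_, ?_⟩, rfl⟩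
        · have := hf.mul (show g.IsHomogeneous (m - d) from hg)
          rwa [Nat.add_sub_cancel' hd] at this
        · exact Ideal.mem_sup_right (Ideal.mul_mem_right _ _ (Ideal.mem_span_singleton_self f))
    rw [hker, ← hmap] at h5
    omega
  · have hPe : P ≤ J.restrictScalars K := by
      rintro p ⟨hp1, hp2⟩
      obtain ⟨a, ha, g, hg⟩ := hmem p hp1 hp2
      rw [if_neg hd, add_zero] at hg
      rw [hg]; exact ha
    have hP : P = homogeneousSubmodule τ K m ⊓ J.restrictScalars K :=
      le_antisymm (le_inf inf_le_left hPe)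
        (inf_le_inf_left _ (le_sup_left (a := J) (b := Ideal.span {f})))
    have : Module.finrank K P = Module.finrank K
        (homogeneousSubmodule τ K m ⊓ J.restrictScalars K : Submodule K _) := by rw [hP]
    omega

/-- Hilbert series along `0 → S/(I ∩ J) → S/I ⊕ S/J → S/(I + J) → 0`. -/
lemma hs_inf_sup {I J : Ideal (MvPolynomial τ K)} (hI : Hom I) (hJ : Hom J) :
    hseries K (I ⊓ J) + hseries K (I ⊔ J) = hseries K I + hseries K J := by
  ext m
  simp only [map_add, coeff_hseries]
  have h1 := hf_add I m
  have h2 := hf_add J m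
  have h3 := hf_add (I ⊓ J) m
  have h4 := hf_add (I ⊔ J) m
  set A := homogeneousSubmodule τ K m
  have hinf : A ⊓ (I ⊓ J).restrictScalars K =
      (A ⊓ I.restrictScalars K) ⊓ (A ⊓ J.restrictScalars K) := by
    ext p
    simp only [Submodule.mem_inf, Submodule.restrictScalars_mem]
    tauto
  have hsup : A ⊓ (I ⊔ J).restrictScalars K =
      (A ⊓ I.restrictScalars K) ⊔ (A ⊓ J.restrictScalars K) := by
    apply le_antisymm
    · rintro p ⟨hp1, hp2⟩
      obtain ⟨a, ha, b, hb, rfl⟩ := Submodule.mem_sup.1 hp2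
      have : a + b = homogeneousComponent m a + homogeneousComponent m b := by
        rw [← map_add, homogeneousComponent_of_mem hp1, if_pos rfl]
      rw [this]
      exact Submodule.add_mem_sup ⟨homogeneousComponent_isHomogeneous _ _, hI a ha m⟩
        ⟨homogeneousComponent_isHomogeneous _ _, hJ b hb m⟩
    · exact sup_le (inf_le_inf_left _ (le_sup_left (a := I) (b := J)))
        (inf_le_inf_left _ (le_sup_right (a := I) (b := J)))
  have : Module.Finite K (A ⊓ I.restrictScalars K : Submodule K _) :=
    Submodule.finiteDimensional_of_le inf_le_left
  have : Module.Finite K (A ⊓ J.restrictScalars K : Submodule K _) :=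
    Submodule.finiteDimensional_of_le inf_le_left
  have h5 := Submodule.finrank_sup_add_finrank_inf_eq (A ⊓ I.restrictScalars K)
    (A ⊓ J.restrictScalars K)
  rw [hinf] at h3
  rw [hsup] at h4
  omega

/-- The Hilbert series of the polynomial ring is `1 / (1 - t)^N` for `N` variables. -/
lemma hs_bot [Nonempty τ] :
    hseries K (⊥ : Ideal (MvPolynomial τ K)) * (1 - t) ^ Fintype.card τ = 1 := by
  classical
  obtain ⟨d, hd⟩ : ∃ d, Fintype.card τ = d + 1 := Nat.exists_eq_succ_of_ne_zero Fintype.card_ne_zero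
  have hs : hseries K (⊥ : Ideal (MvPolynomial τ K)) = PowerSeries.mk 1 ^ (d + 1) := by
    rw [PowerSeries.mk_one_pow_eq_mk_choose_add]
    ext m
    rw [coeff_hseries, PowerSeries.coeff_mk]
    have h := hf_add (⊥ : Ideal (MvPolynomial τ K)) m
    have h0 : homogeneousSubmodule τ K m ⊓ (⊥ : Ideal (MvPolynomial τ K)).restrictScalars K = ⊥ := by
      rw [Submodule.restrictScalars_bot, inf_bot_eq]
    rw [h0, finrank_bot, add_zero] at h
    rw [h, homogeneousSubmodule_eq_finsupp_supported,
      (AddMonoidAlgebra.supportedEquivFinsupp _).finrank_eq]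
    have he : {c : τ →₀ ℕ | c.degree = m} = ↑((Finset.univ : Finset τ).finsuppAntidiag m) := by
      ext c
      simp [Finsupp.degree_eq_sum]
    rw [he, Module.finrank_finsupp_self]
    simp only [Finset.coe_sort_coe, Fintype.card_coe]
    rw [Finset.card_finsuppAntidiag_nat_eq_choose, Finset.card_univ, hd]
    congr 1
    rw [show d + 1 + m - 1 = d + m by omega, Nat.choose_symm_add]
  rw [hs, hd, t, ← mul_pow, PowerSeries.mk_one_mul_one_sub_eq_one, one_pow]

end hilbert

/-! ### The two recursions for the numerator -/

section recursion

variable {K : Type} [Field K] {σ : Type}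

lemma fb_hom (i j : σ) : (fb K i j).IsHomogeneous 2 :=
  ((isHomogeneous_X K _).mul (isHomogeneous_X K _)).sub
    ((isHomogeneous_X K _).mul (isHomogeneous_X K _))

lemma JE_hom (G : SimpleGraph σ) : Hom (JE K G) := by
  refine hom_span _ ?_
  rintro _ ⟨i, j, -, rfl⟩
  exact ⟨2, fb_hom i j⟩

lemma span_xv_hom (v : σ) : Hom (Ideal.span {xv K v}) := by
  refine hom_span _ ?_
  rintro _ rfl
  exact ⟨1, isHomogeneous_X K _⟩

lemma xy_hom (v : σ) : Hom (xy K v) := by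
  refine hom_span _ ?_
  rintro _ (rfl | rfl)
  · exact ⟨1, isHomogeneous_X K _⟩
  · exact ⟨1, isHomogeneous_X K _⟩

lemma JE_edge (G : SimpleGraph σ) {v w : σ} (h : v ≠ w) :
    JE K (G ⊔ SimpleGraph.edge v w) = JE K G ⊔ Ideal.span {fb K v w} := by
  apply le_antisymm
  · refine Ideal.span_le.2 ?_
    have hvw : fb K v w ∈ JE K G ⊔ Ideal.span {fb K v w} :=
      Ideal.mem_sup_right (Ideal.mem_span_singleton_self _)
    rintro _ ⟨i, j, hij | hij, rfl⟩
    · exact Ideal.mem_sup_left (fb_mem hij)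
    · rw [SimpleGraph.edge_adj] at hij
      rcases hij.1 with ⟨rfl, rfl⟩ | ⟨rfl, rfl⟩
      · exact hvw
      · have : fb K i j = - fb K j i := by simp only [fb]; ring
        rw [this]
        exact neg_mem hvw
  · refine sup_le (JE_mono le_sup_left) ((Ideal.span_singleton_le_iff_mem _).2 (fb_mem ?_))
    exact Or.inr ((SimpleGraph.edge_adj ..).2 ⟨Or.inl ⟨rfl, rfl⟩, h⟩)

lemma iso_del (G : SimpleGraph σ) (v : σ) : Iso (del G v) v := fun _ h => h.2.1 rfl

variable [Fintype σ]

/-- If `v` is isolated then `x_v, y_v` is a regular sequence on `S/J_G`. -/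
lemma hs_kill {G : SimpleGraph σ} {v : σ} (h : Iso G v) :
    hseries K (xy K v ⊔ JE K G) = (1 - t) ^ 2 * hseries K (JE K G) := by
  classical
  have h1 := hs_colon (JE_hom G) (isHomogeneous_X K (Sum.inl v : σ ⊕ σ))
    (fun g => ⟨nzd_xv h g, Ideal.mul_mem_left _ _⟩)
  let r : MvPolynomial (σ ⊕ σ) K →ₐ[K] MvPolynomial (σ ⊕ σ) K :=
    aeval (fun s => if s = Sum.inl v then 0 else X s)
  have hr (p : MvPolynomial (σ ⊕ σ) K) : p - r p ∈ Ideal.span {xv K v} := by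
    have : Ideal.Quotient.mkₐ K (Ideal.span {xv K v}) =
        (Ideal.Quotient.mkₐ K (Ideal.span {xv K v})).comp r := by
      refine MvPolynomial.algHom_ext fun s => ?_
      by_cases hs : s = Sum.inl v
      · subst hs
        have h0 : Ideal.Quotient.mk (Ideal.span {xv K v}) (X (Sum.inl v)) = 0 :=
          Ideal.Quotient.eq_zero_iff_mem.2 (Ideal.mem_span_singleton_self (xv K v))
        simpa [r] using h0
      · simp [r, hs]
    exact Ideal.Quotient.eq.1 (DFunLike.congr_fun this p)
  have hrJ {p : MvPolynomial (σ ⊕ σ) K} :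
      p ∈ JE K G ⊔ Ideal.span {xv K v} ↔ r p ∈ JE K G := by
    constructor
    · intro hp
      have hle : JE K G ⊔ Ideal.span {xv K v} ≤ (JE K G).comap r.toRingHom := by
        refine sup_le (Ideal.span_le.2 ?_) ((Ideal.span_singleton_le_iff_mem _).2 ?_)
        · rintro _ ⟨i, j, hij, rfl⟩
          have hi : i ≠ v := by rintro rfl; exact h _ hij
          have hj : j ≠ v := by rintro rfl; exact h _ hij.symm
          have : r (fb K i j) = fb K i j := by simp [r, fb, xv, yv, hi, hj]
          change r (fb K i j) ∈ JE K G
          rw [this]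
          exact fb_mem hij
        · change r (xv K v) ∈ JE K G
          simp [r, xv]
      exact hle hp
    · intro hp
      rw [← sub_add_cancel p (r p)]
      exact add_mem (Ideal.mem_sup_right (hr p)) (Ideal.mem_sup_left hp)
  have h2 := hs_colon ((JE_hom G).sup (span_xv_hom v)) (isHomogeneous_X K (Sum.inr v : σ ⊕ σ))
    (fun g => ⟨fun hg => hrJ.2 (nzd_yv h _ (by
      have := hrJ.1 hg
      rw [map_mul] at this
      simpa [r, yv] using this)), Ideal.mul_mem_left _ _⟩)
  have h3 : JE K G ⊔ Ideal.span {xv K v} ⊔ Ideal.span {X (Sum.inr v)} = xy K v ⊔ JE K G := by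
    rw [xy, Ideal.span_insert, sup_assoc, sup_comm]
    rfl
  rw [h3] at h2
  change _ = hseries K (JE K G ⊔ Ideal.span {xv K v}) + _ at h1
  linear_combination -h2 - (1 - t) * h1

/-- The numerator of the Hilbert series of `S/J_G` over the denominator `(1 - t)^(2n)`. -/
def num (K : Type) [Field K] (G : SimpleGraph σ) : PowerSeries ℤ :=
  hseries K (JE K G) * (1 - t) ^ Fintype.card (σ ⊕ σ)

lemma num_bot [Nonempty σ] : num K (⊥ : SimpleGraph σ) = 1 := by
  have : JE K (⊥ : SimpleGraph σ) = ⊥ := by simp [JE]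
  rw [num, this, hs_bot]

lemma num_edge {G : SimpleGraph σ} {v w : σ} (hvw : v ≠ w) (hw : Iso G w) :
    num K (G ⊔ SimpleGraph.edge v w) = num K G - t ^ 2 * num K (comp G v) := by
  have := hs_colon (JE_hom G) (fb_hom v w) (colon_fb (K := K) hvw hw)
  rw [num, num, num, JE_edge G hvw, this]
  ring

/-- Attaching a pendant edge at a simplicial vertex. -/
lemma num_edge_simp {G : SimpleGraph σ} {v w : σ} (hvw : v ≠ w) (hw : Iso G w) (hv : Simp G v) :
    num K (G ⊔ SimpleGraph.edge v w) = (1 - t ^ 2) * num K G := by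
  rw [num_edge hvw hw, comp_eq_of_simp hv]
  ring

/-- The recursion given by Ohtani's decomposition of `J_G` at the vertex `v`. -/
lemma num_ohtani (G : SimpleGraph σ) (v : σ) :
    num K G + (1 - t) ^ 2 * num K (del (comp G v) v) =
      num K (comp G v) + (1 - t) ^ 2 * num K (del G v) := by
  have := hs_inf_sup (JE_hom (K := K) (comp G v)) ((xy_hom v).sup (JE_hom (K := K) (del G v)))
  rw [ohtani, ohtani_sup, hs_kill (iso_del _ v), hs_kill (iso_del _ v)] at this
  unfold num
  linear_combination (1 - t) ^ Fintype.card (σ ⊕ σ) * this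

end recursion

/-! ### Stars and double stars -/

section small

open SimpleGraph

variable {K : Type} [Field K] {σ : Type}

/-- The star with centre `a` and leaves `b, c`. -/
def star2 (a b c : σ) : SimpleGraph σ := ⊥ ⊔ edge a b ⊔ edge a c

/-- The triangle on `a, b, c`. -/
def tri (a b c : σ) : SimpleGraph σ := star2 a b c ⊔ edge b c

/-- The star with centre `a` and leaves `b, c, d`. -/
def claw (a b c d : σ) : SimpleGraph σ := star2 a b c ⊔ edge a d

/-- The complete graph on `a, b, c, d`. -/
def quad (a b c d : σ) : SimpleGraph σ := claw a b c d ⊔ edge b c ⊔ edge b d ⊔ edge c d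

/-- Two adjacent centres `a, b`, with further leaves `c, d` at `a` and `e, f` at `b`. -/
def dstar (a b c d e f : σ) : SimpleGraph σ := claw a b c d ⊔ edge b e ⊔ edge b f

lemma comp_star2 {a b c : σ} (h : [a, b, c].Nodup) : comp (star2 a b c) a = tri a b c := by
  simp only [List.nodup_cons, List.mem_cons, List.not_mem_nil, not_or] at h
  ext i j
  simp only [comp, tri, star2, sup_adj, edge_adj, bot_adj]
  grind

lemma comp_claw {a b c d : σ} (h : [a, b, c, d].Nodup) :
    comp (claw a b c d) a = quad a b c d := by
  simp only [List.nodup_cons, List.mem_cons, List.not_mem_nil, not_or] at h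
  ext i j
  simp only [comp, quad, claw, star2, sup_adj, edge_adj, bot_adj]
  grind

lemma del_claw {a b c d : σ} : del (claw a b c d) a = ⊥ := by
  ext i j
  simp only [del, claw, star2, sup_adj, edge_adj, bot_adj]
  grind

lemma del_star2 {a b c : σ} : del (star2 a b c) a = ⊥ := by
  ext i j
  simp only [del, star2, sup_adj, edge_adj, bot_adj]
  grind

lemma del_tri {a b c : σ} (h : [a, b, c].Nodup) : del (tri a b c) a = ⊥ ⊔ edge b c := by
  simp only [List.nodup_cons, List.mem_cons, List.not_mem_nil, not_or] at h
  ext i j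
  simp only [del, tri, star2, sup_adj, edge_adj, bot_adj]
  grind

lemma del_quad {a b c d : σ} (h : [a, b, c, d].Nodup) : del (quad a b c d) a = tri b c d := by
  simp only [List.nodup_cons, List.mem_cons, List.not_mem_nil, not_or] at h
  ext i j
  simp only [del, quad, claw, tri, star2, sup_adj, edge_adj, bot_adj]
  grind

lemma comp_tri_edge {a b c d : σ} (h : [a, b, c, d].Nodup) :
    comp (tri a b c ⊔ edge a d) a = quad a b c d := by
  simp only [List.nodup_cons, List.mem_cons, List.not_mem_nil, not_or] at h
  ext i j
  simp only [comp, quad, claw, tri, star2, sup_adj, edge_adj, bot_adj]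
  grind

lemma comp_claw_edge {a b c d e : σ} (h : [a, b, c, d, e].Nodup) :
    comp (claw a b c d ⊔ edge b e) b = tri a b e ⊔ edge a c ⊔ edge a d := by
  simp only [List.nodup_cons, List.mem_cons, List.not_mem_nil, not_or] at h
  ext i j
  simp only [comp, claw, tri, star2, sup_adj, edge_adj, bot_adj]
  grind

variable [Fintype σ]

lemma num_star2 {a b c : σ} (h : [a, b, c].Nodup) :
    num K (star2 a b c) = (1 - t ^ 2) ^ 2 := by
  have : Nonempty σ := ⟨a⟩
  simp only [List.nodup_cons, List.mem_cons, List.not_mem_nil, not_or] at h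
  rw [star2, num_edge_simp h.1.2.1, num_edge_simp h.1.1, num_bot]
  · ring
  all_goals
    simp only [Simp, Iso, sup_adj, edge_adj, bot_adj]
    grind

lemma num_tri {a b c : σ} (h : [a, b, c].Nodup) :
    num K (tri a b c) = (1 - t ^ 2) ^ 2 - (1 - t) ^ 2 + (1 - t) ^ 2 * (1 - t ^ 2) := by
  have : Nonempty σ := ⟨a⟩
  have hbc : b ≠ c := by simp at h; tauto
  have h1 := num_ohtani (K := K) (star2 a b c) a
  rw [comp_star2 h, del_star2, del_tri h, num_star2 h, num_bot, num_edge_simp hbc, num_bot] at h1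
  · linear_combination -h1
  all_goals simp [Simp, Iso]

/-- The edge `ad` is pendant at the centre of a star with two leaves, whose completion at `a` is a
triangle. -/
lemma num_claw {a b c d : σ} (h : [a, b, c, d].Nodup) :
    num K (claw a b c d) = (1 - t) ^ 2 * (1 + 2 * t - 2 * t ^ 3) := by
  have h3 : [a, b, c].Nodup := h.sublist (by simp)
  simp only [List.nodup_cons, List.mem_cons, List.not_mem_nil, not_or] at h
  rw [claw, num_edge h.1.2.2.1, comp_star2 h3, num_star2 h3, num_tri h3]
  · ring
  · simp only [Iso, star2, sup_adj, edge_adj, bot_adj]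
    grind

lemma num_quad {a b c d : σ} (h : [a, b, c, d].Nodup) :
    num K (quad a b c d) = num K (claw a b c d) - (1 - t) ^ 2 + (1 - t) ^ 2 * num K (tri b c d) := by
  have : Nonempty σ := ⟨a⟩
  have h1 := num_ohtani (K := K) (claw a b c d) a
  rw [comp_claw h, del_claw, del_quad h, num_bot] at h1
  linear_combination -h1

/-- The last edge `bf` is removed by the pendant-edge recursion. Completing at `b` then yields a
triangle `a, b, e` with two pendant edges at `a`, which the same recursion reduces to `K₄`. -/
lemma num_dstar {a b c d e f : σ} (h : [a, b, c, d, e, f].Nodup) :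
    num K (dstar a b c d e f) = (1 - t) ^ 4 * (1 + 4 * t + 5 * t ^ 2 - 3 * t ^ 4) := by
  have h5 : [a, b, c, d, e].Nodup := h.sublist (by simp)
  have h4 : [a, b, c, d].Nodup := h.sublist (by simp)
  simp only [List.nodup_cons, List.mem_cons, List.not_mem_nil, not_or] at h
  have ht : [a, b, e].Nodup := by simp; tauto
  have hq : [a, b, e, c].Nodup := by simp; grind
  have ht' : [b, e, c].Nodup := by simp; grind
  have hbe : b ≠ e := h.2.1.2.2.1
  have hbf : b ≠ f := h.2.1.2.2.2.1
  have hac : a ≠ c := h.1.2.1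
  have had : a ≠ d := h.1.2.2.1
  rw [dstar, num_edge hbf, comp_claw_edge h5, num_edge_simp hbe, num_edge had,
    comp_tri_edge hq, num_edge_simp hac, num_quad hq, num_claw h4, num_claw hq, num_tri ht,
    num_tri ht']
  · ring
  all_goals
    simp only [Simp, Iso, claw, tri, star2, sup_adj, edge_adj, bot_adj]
    grind

end small

/-! ### Growing a rooted tree -/

section trees

open SimpleGraph

variable {K : Type} [Field K] {σ : Type}

/-- The graph formed by the edges from the vertices of `T` to their parents; a vertex of `T` that is
its own parent contributes no edge. -/
def pgr (par : σ → σ) (T : Finset σ) : SimpleGraph σ :=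
  SimpleGraph.fromRel (fun i j => i ∈ T ∧ j = par i)

/-- A tree rooted at `a` is described by a parent function, with a height `l` that decreases towards
the parent. Each vertex picks a neighbour closer to `a`; the resulting subgraph is connected, hence
is the whole tree. -/
lemma exists_par [Fintype σ] [DecidableEq σ] {G : SimpleGraph σ} (hG : G.IsTree) (a : σ) :
    ∃ (par : σ → σ) (l : σ → ℕ), (∀ v, v ≠ a → l (par v) < l v) ∧
      G = pgr par (Finset.univ.erase a) := by
  have h (v : σ) : ∃ u, v ≠ a → G.Adj v u ∧ G.dist u a < G.dist v a := by
    by_cases hv : v = a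
    · exact ⟨a, fun h => (h hv).elim⟩
    obtain ⟨p, hp⟩ := (hG.connected v a).exists_walk_length_eq_dist
    cases p with
    | nil => exact (hv rfl).elim
    | @cons _ u _ hvu q =>
      refine ⟨u, fun _ => ⟨hvu, ?_⟩⟩
      rw [← hp, Walk.length_cons]
      exact Nat.lt_succ_of_le (dist_le q)
  choose par hpar using h
  refine ⟨par, fun v => G.dist v a, fun v hv => (hpar v hv).2, ?_⟩
  have hle : pgr par (Finset.univ.erase a) ≤ G := by
    intro i j hij
    simp only [pgr, fromRel_adj, Finset.mem_erase, Finset.mem_univ, and_true] at hij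
    rcases hij with ⟨-, ⟨hi, rfl⟩ | ⟨hj, rfl⟩⟩
    · exact (hpar i hi).1
    · exact (hpar j hj).1.symm
  have hreach (m : ℕ) : ∀ v, G.dist v a = m → (pgr par (Finset.univ.erase a)).Reachable v a := by
    induction m using Nat.strong_induction_on with
    | _ m ih =>
      intro v hv
      by_cases hva : v = a
      · rw [hva]
      obtain ⟨h1, h2⟩ := hpar v hva
      refine Reachable.trans (Adj.reachable ?_) (ih _ (hv ▸ h2) _ rfl)
      simp [pgr, h1.ne, hva]
  have hconn : (pgr par (Finset.univ.erase a)).Connected :=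
    { preconnected := fun u v => (hreach _ u rfl).trans (hreach _ v rfl).symm
      nonempty := ⟨a⟩ }
  exact le_antisymm ((isTree_iff_minimal_connected.1 hG).2 hconn hle) hle

lemma pgr_claw [DecidableEq σ] {par : σ → σ} {a b c d : σ} (h : [a, b, c, d].Nodup)
    (hb : par b = a) (hc : par c = a) (hd : par d = a) :
    pgr par {b, c, d} = claw a b c d := by
  simp only [List.nodup_cons, List.mem_cons, List.not_mem_nil, not_or] at h
  ext i j
  simp only [pgr, fromRel_adj, claw, star2, sup_adj, edge_adj, bot_adj, Finset.mem_insert,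
    Finset.mem_singleton]
  grind

lemma pgr_dstar [DecidableEq σ] {par : σ → σ} {a b c d e f : σ} (h : [a, b, c, d, e, f].Nodup)
    (hb : par b = a) (hc : par c = a) (hd : par d = a) (he : par e = b) (hf : par f = b) :
    pgr par {b, c, d, e, f} = dstar a b c d e f := by
  simp only [List.nodup_cons, List.mem_cons, List.not_mem_nil, not_or] at h
  ext i j
  simp only [pgr, fromRel_adj, dstar, claw, star2, sup_adj, edge_adj, bot_adj, Finset.mem_insert,
    Finset.mem_singleton]
  grind (splits := 20)

/-- The vertices of `T` are attached to the part spanned by `T₀` in order of increasing height. By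
`hdeg`, the parent then has degree at most one in the graph built so far, so it is simplicial, and
each step multiplies the numerator by `1 - t²`. -/
lemma num_grow [Fintype σ] [DecidableEq σ] {G : SimpleGraph σ} {a : σ} {par : σ → σ} {l : σ → ℕ}
    (hl : ∀ v, v ≠ a → l (par v) < l v) (hG : G = pgr par (Finset.univ.erase a))
    {T₀ : Finset σ} (ha₀ : a ∉ T₀) (hT₀ : ∀ v ∈ T₀, par v = a ∨ par v ∈ T₀) (T : Finset σ)
    (haT : a ∉ T) (hdisj : Disjoint T₀ T)
    (hdeg : ∀ w ∈ T, ∀ x y, G.Adj (par w) x → G.Adj (par w) y → x ≠ w → y ≠ w → x = y) :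
    num K (pgr par (T₀ ∪ T)) = (1 - t ^ 2) ^ T.card * num K (pgr par T₀) := by
  induction T using Finset.induction_on_max_value l with
  | empty => simp
  | insert w T hw hmax ih =>
    rw [Finset.disjoint_insert_right] at hdisj
    rw [Finset.mem_insert, not_or] at haT
    have hwa : w ≠ a := fun h => haT.1 h.symm
    have hpw : par w ≠ w := fun h => by have := hl w hwa; rw [h] at this; omega
    have hle : pgr par (T₀ ∪ T) ≤ G := by
      intro i j hij
      rw [hG]
      simp only [pgr, fromRel_adj, Finset.mem_erase, Finset.mem_univ, and_true,
        Finset.mem_union] at hij ⊢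
      grind
    have hiso : Iso (pgr par (T₀ ∪ T)) w := by
      intro u hu
      simp only [pgr, fromRel_adj, Finset.mem_union] at hu
      rcases hu with ⟨-, ⟨hu | hu, -⟩ | ⟨hu | hu, rfl⟩⟩
      · exact hdisj.1 hu
      · exact hw hu
      · exact (hT₀ u hu).elim hwa hdisj.1
      · have h1 := hl u (fun h => haT.2 (h ▸ hu))
        have h2 := hmax u hu
        omega
    have hsimp : Simp (pgr par (T₀ ∪ T)) (par w) := by
      intro x y hx hy hxy
      refine (hxy (hdeg w (Finset.mem_insert_self _ _) x y (hle hx) (hle hy) ?_ ?_)).elim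
      · rintro rfl; exact hiso _ hx.symm
      · rintro rfl; exact hiso _ hy.symm
    have hgr : pgr par (T₀ ∪ insert w T) = pgr par (T₀ ∪ T) ⊔ edge (par w) w := by
      ext i j
      simp only [pgr, fromRel_adj, Finset.mem_union, Finset.mem_insert, sup_adj, edge_adj]
      grind
    rw [hgr, num_edge_simp hpw hiso hsimp, Finset.card_insert_of_notMem hw,
      ih haT.2 hdisj.2 (fun v hv => hdeg v (Finset.mem_insert_of_mem hv))]
    ring

end trees

/-! ### Vertices of degree three and the final cancellation -/

section main

open SimpleGraph

variable {K : Type} [Field K] {n : ℕ}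

lemma bei_eq (G : SimpleGraph (Fin n)) : bei K G = JE K G := by
  apply le_antisymm
  · refine Ideal.span_mono ?_
    rintro _ ⟨i, j, -, hij, rfl⟩
    exact ⟨i, j, hij, rfl⟩
  · refine Ideal.span_le.2 ?_
    rintro _ ⟨i, j, hij, rfl⟩
    rcases lt_or_gt_of_ne hij.ne with h | h
    · exact Ideal.subset_span ⟨i, j, h, hij, rfl⟩
    · have : fb K i j = -(fb K j i) := by simp only [fb]; ring
      rw [this]
      exact neg_mem (Ideal.subset_span ⟨j, i, h, hij.symm, rfl⟩)

/-- The three neighbours of a vertex of degree three, one of them prescribed. -/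
lemma nbrs_of_deg_three {G : SimpleGraph (Fin n)} {a b : Fin n} (h : deg G a = 3)
    (hab : G.Adj a b) : ∃ c d, [a, b, c, d].Nodup ∧ ∀ x, G.Adj a x ↔ x = b ∨ x = c ∨ x = d := by
  have h2 : (G.neighborSet a \ {b}).ncard = 2 := by
    rw [Set.ncard_sdiff_singleton_of_mem (show b ∈ G.neighborSet a from hab), ← Nat.card_coe_set_eq]
    change deg G a - 1 = 2
    rw [h]
  obtain ⟨c, d, hcd, hs⟩ := Set.ncard_eq_two.1 h2
  have hx (x : Fin n) : G.Adj a x ∧ x ≠ b ↔ x = c ∨ x = d := by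
    simpa using Set.ext_iff.1 hs x
  have hc := (hx c).2 (Or.inl rfl)
  have hd := (hx d).2 (Or.inr rfl)
  refine ⟨c, d, ?_, fun x => ?_⟩
  · have := hab.ne
    have := hc.1.ne
    have := hd.1.ne
    simp
    grind
  · grind

lemma nbr_unique_of_deg_le_two {G : SimpleGraph (Fin n)} {u w : Fin n} (h : deg G u ≤ 2)
    (hw : G.Adj u w) (x y : Fin n) (hx : G.Adj u x) (hy : G.Adj u y) (hxw : x ≠ w) (hyw : y ≠ w) :
    x = y := by
  by_contra hxy
  have h1 : ({x, y, w} : Set (Fin n)).ncard = 3 := Set.ncard_eq_three.2 ⟨x, y, w, hxy, hxw, hyw, rfl⟩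
  have h2 : ({x, y, w} : Set (Fin n)) ⊆ G.neighborSet u := by
    rintro z (rfl | rfl | rfl) <;> assumption
  have h3 := Set.ncard_le_ncard h2 (Set.toFinite _)
  rw [h1, ← Nat.card_coe_set_eq] at h3
  change 3 ≤ deg G u at h3
  omega

/-- Clearing the common factor `(1 - t)^(n-2)` from the Hilbert series. -/
lemma hs_of_num {G : SimpleGraph (Fin n)} {r k : ℕ} (hk : n = k + (r + 2)) {p : PowerSeries ℤ}
    (h : num K G = (1 - t ^ 2) ^ k * ((1 - t) ^ r * p)) :
    hseries K (bei K G) * (1 - t) ^ (n + 2) = p * (1 + t) ^ k := by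
  have ht : (1 - t : PowerSeries ℤ) ≠ 0 := by
    intro h0
    simpa [t] using congrArg (PowerSeries.coeff 0) h0
  apply mul_right_cancel₀ (pow_ne_zero (k + r) ht)
  have h2 : (1 - t ^ 2 : PowerSeries ℤ) = (1 - t) * (1 + t) := by ring
  rw [num, Fintype.card_sum, Fintype.card_fin, ← bei_eq, h2, mul_pow] at h
  have hn : n + n = n + 2 + (k + r) := by omega
  rw [hn, pow_add] at h
  rw [mul_assoc, h]
  ring

end main

/-- Let `G` be a 3-star like tree on `[n]`.  If `G` has exactly one
vertex of degree `3` (first type) and `n > 3`, then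
`H(S/J_G, t) = (1 + 2t − 2t³)(1 + t)^{n−4} / (1 − t)^{n+2}`.
If `G` has exactly two vertices of degree `3`, joined by an edge (second type), and
`n > 5`, then `H(S/J_G, t) = (1 + 4t + 5t² − 3t⁴)(1 + t)^{n−6} / (1 − t)^{n+2}`. -/
theorem statement6 (K : Type) [Field K] (n : ℕ) (G : SimpleGraph (Fin n))
    (hG : G.IsTree) (hmax : ∀ v, deg G v ≤ 3) :
    ((3 < n ∧ ∃! v, deg G v = 3) →
      hseries K (bei K G) * (1 - t) ^ (n + 2) =
        (1 + 2 * t - 2 * t ^ 3) * (1 + t) ^ (n - 4)) ∧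
    ((5 < n ∧ ∃ a b : Fin n, a ≠ b ∧ G.Adj a b ∧ {v | deg G v = 3} = {a, b}) →
      hseries K (bei K G) * (1 - t) ^ (n + 2) =
        (1 + 4 * t + 5 * t ^ 2 - 3 * t ^ 4) * (1 + t) ^ (n - 6)) := by
  constructor
  · rintro ⟨hn, a, ha, hu⟩
    obtain ⟨par, l, hl, hpar⟩ := exists_par hG a
    have hadj (i j : Fin n) : G.Adj i j ↔ i ≠ j ∧ ((i ≠ a ∧ j = par i) ∨ (j ≠ a ∧ i = par j)) := by
      conv_lhs => rw [hpar]
      simp [pgr]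
    have hpa (x : Fin n) (hx : G.Adj a x) : par x = a := by
      obtain ⟨-, ⟨h, -⟩ | ⟨-, h⟩⟩ := (hadj a x).1 hx
      · exact (h rfl).elim
      · exact h.symm
    obtain ⟨b, hb⟩ : ∃ b, G.Adj a b := by
      have : (G.neighborSet a).Nonempty := by
        rw [← Set.ncard_pos, ← Nat.card_coe_set_eq]
        change 0 < deg G a
        omega
      exact this
    obtain ⟨c, d, hnd, hN⟩ := nbrs_of_deg_three ha hb
    have hnd' := hnd
    simp only [List.nodup_cons, List.mem_cons, List.not_mem_nil, not_or] at hnd'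
    have hpb : par b = a := hpa b ((hN b).2 (by simp))
    have hpc : par c = a := hpa c ((hN c).2 (by simp))
    have hpd : par d = a := hpa d ((hN d).2 (by simp))
    have hbase := pgr_claw hnd hpb hpc hpd
    have hsub : {b, c, d} ⊆ Finset.univ.erase a := by
      intro x
      simp
      grind
    have h := num_grow (K := K) hl hpar (T₀ := {b, c, d}) (by simp; grind) (by simp; grind)
      (Finset.univ.erase a \ {b, c, d}) (by simp) Finset.disjoint_sdiff (by
        intro w hw
        simp only [Finset.mem_sdiff, Finset.mem_erase, Finset.mem_univ, Finset.mem_insert,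
          Finset.mem_singleton, and_true, not_or] at hw
        have hw1 : G.Adj (par w) w := by
          refine (hadj _ _).2 ⟨fun h => ?_, Or.inr ⟨hw.1, rfl⟩⟩
          have := hl w hw.1
          rw [h] at this
          omega
        have hw2 : par w ≠ a := fun h => by
          rw [h, hN] at hw1
          tauto
        have hw3 : deg G (par w) ≠ 3 := fun h => hw2 (hu _ h)
        have hw4 := hmax (par w)
        exact nbr_unique_of_deg_le_two (by omega) hw1)
    rw [Finset.union_sdiff_of_subset hsub, ← hpar, hbase, num_claw hnd,
      Finset.card_sdiff_of_subset hsub, Finset.card_erase_of_mem (Finset.mem_univ a),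
      Finset.card_univ, Fintype.card_fin, Finset.card_eq_three.2
        ⟨b, c, d, hnd'.2.1.1, hnd'.2.1.2.1, hnd'.2.2.1.1, rfl⟩] at h
    exact hs_of_num (by omega) h
  · rintro ⟨hn, a, b, hab, hb, hset⟩
    have hdeg (v : Fin n) : deg G v = 3 ↔ v = a ∨ v = b := by
      simpa using Set.ext_iff.1 hset v
    obtain ⟨par, l, hl, hpar⟩ := exists_par hG a
    have hadj (i j : Fin n) : G.Adj i j ↔ i ≠ j ∧ ((i ≠ a ∧ j = par i) ∨ (j ≠ a ∧ i = par j)) := by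
      conv_lhs => rw [hpar]
      simp [pgr]
    have hpa (x : Fin n) (hx : G.Adj a x) : par x = a := by
      obtain ⟨-, ⟨h, -⟩ | ⟨-, h⟩⟩ := (hadj a x).1 hx
      · exact (h rfl).elim
      · exact h.symm
    obtain ⟨c, d, hnd, hN⟩ := nbrs_of_deg_three ((hdeg a).2 (Or.inl rfl)) hb
    obtain ⟨e, f, hnd2, hN2⟩ := nbrs_of_deg_three ((hdeg b).2 (Or.inr rfl)) hb.symm
    simp only [List.nodup_cons, List.mem_cons, List.not_mem_nil, not_or] at hnd hnd2
    have hpb : par b = a := hpa b ((hN b).2 (by simp))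
    have hpc : par c = a := hpa c ((hN c).2 (by simp))
    have hpd : par d = a := hpa d ((hN d).2 (by simp))
    have hpb' (x : Fin n) (hx : G.Adj b x) (hxa : x ≠ a) : par x = b := by
      obtain ⟨-, ⟨-, h⟩ | ⟨-, h⟩⟩ := (hadj b x).1 hx
      · exact (hxa (h.trans hpb)).elim
      · exact h.symm
    have hpe : par e = b := hpb' e ((hN2 e).2 (by simp)) (by tauto)
    have hpf : par f = b := hpb' f ((hN2 f).2 (by simp)) (by tauto)
    have hnd6 : [a, b, c, d, e, f].Nodup := by
      simp only [List.nodup_cons, List.mem_cons, List.not_mem_nil, not_or]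
      grind
    have hbase := pgr_dstar hnd6 hpb hpc hpd hpe hpf
    have hsub : {b, c, d, e, f} ⊆ Finset.univ.erase a := by
      intro x
      simp
      grind
    have hcard : ({b, c, d, e, f} : Finset (Fin n)).card = 5 := by
      have := List.toFinset_card_of_nodup (l := [b, c, d, e, f]) (hnd6.sublist (by simp))
      simpa using this
    have h := num_grow (K := K) hl hpar (T₀ := {b, c, d, e, f}) (by simp; grind) (by simp; grind)
      (Finset.univ.erase a \ {b, c, d, e, f}) (by simp) Finset.disjoint_sdiff (by
        intro w hw
        simp only [Finset.mem_sdiff, Finset.mem_erase, Finset.mem_univ, Finset.mem_insert,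
          Finset.mem_singleton, and_true, not_or] at hw
        have hw1 : G.Adj (par w) w := by
          refine (hadj _ _).2 ⟨fun h => ?_, Or.inr ⟨hw.1, rfl⟩⟩
          have := hl w hw.1
          rw [h] at this
          omega
        have hw2 : ¬ (par w = a ∨ par w = b) := by
          rintro (h | h)
          · rw [h, hN] at hw1
            tauto
          · rw [h, hN2] at hw1
            tauto
        have hw3 : deg G (par w) ≠ 3 := fun h => hw2 ((hdeg _).1 h)
        have hw4 := hmax (par w)
        exact nbr_unique_of_deg_le_two (by omega) hw1)
    rw [Finset.union_sdiff_of_subset hsub, ← hpar, hbase, num_dstar hnd6,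
      Finset.card_sdiff_of_subset hsub, Finset.card_erase_of_mem (Finset.mem_univ a),
      Finset.card_univ, Fintype.card_fin, hcard] at h
    exact hs_of_num (by omega) h

end BEIPaper
end
end

section
/- Let C be the cycle of length n ≥ 3 on [n] and I_C its binomial edge ideal. Then the n+1 linear forms x_1, y_1 − x_2, y_2 − x_3, …, y_{n−1} − x_n, y_n form a homogeneous system of parameters for S/I_C; that is, dim(S/I_C) = n + 1 and the quotient of S/I_C by the ideal generated by these n+1 elements has Krull dimension 0. -/
/-!
Write `B = S/I_C` and let `A` be a polynomial ring over `K` in `n + 1` variables, mapped to `B` by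
the linear forms `x_1`, `y_j - x_{j+1}`, `y_n`.

*Upper bounds.* `B` is integral over `A`. Modulo terms that are linear over `A`, one has
`y_i = x_{i+1}`, so the edge relation `x_i y_{i+1} = x_{i+1} y_i` expresses `x_{i+1}^2` as
`x_i w` plus a term of degree at most `1`, where `w` has degree at most `1`. Since `x_1` comes from
`A`, induction along the path shows that some power `x_i^N` is a polynomial of degree less than `N`
in the `x_j` with coefficients in `A` (`exists_pow_degLE`). Every monomial can then be rewritten in
terms of the finitely many monomials with bounded exponents, so the `x_i` are integral
(`isIntegral_of_pow_degLE`). As integral extensions do not raise the dimension, `dim B ≤ n + 1`.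
The very same statement (`path_isIntegral`), with `A` replaced by `K`, shows that the quotient of
`B` by the linear forms is integral over `K`, hence of dimension `0`. Only the edges `{i, i + 1}`
are used here.

*Lower bound.* `I_C` lies in the kernel of `φ : x_i ↦ t_i, y_i ↦ t_i s`. The image of `φ` is a
domain, and setting `t_1 = 1` maps it onto a polynomial ring in the `n` variables `s, t_2, …, t_n`
while killing the nonzero element `t_1 - 1`; so `dim B ≥ n + 1`.
-/


open MvPolynomial CategoryTheory Opposite

noncomputable section

namespace BEIPaper

/-! ### Integrality and Krull dimension -/

/-- An integral extension does not raise the Krull dimension, by incomparability of primes. -/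
lemma ringKrullDim_le_of_integral (A B : Type*) [CommRing A] [CommRing B] [Algebra A B]
    [Algebra.IsIntegral A B] : ringKrullDim B ≤ ringKrullDim A := by
  refine Order.krullDim_le_of_strictMono (PrimeSpectrum.comap (algebraMap A B)) ?_
  intro p q hpq
  exact Ideal.IsIntegral.comap_lt_comap (R := A) (I := p.asIdeal) (J := q.asIdeal) hpq

section DegLE

variable {A B σ : Type*} [CommRing A] [CommRing B] [Algebra A B]

/-- `u` is the value at `x` of a polynomial of total degree at most `d` with coefficients in `A`. -/
def DegLE (A : Type*) {B σ : Type*} [CommRing A] [CommRing B] [Algebra A B]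
    (x : σ → B) (d : ℕ) (u : B) : Prop :=
  ∃ p : MvPolynomial σ A, p.totalDegree ≤ d ∧ aeval x p = u

lemma DegLE.mono {x : σ → B} {d e : ℕ} {u : B} (h : DegLE A x d u) (hde : d ≤ e) :
    DegLE A x e u := by
  obtain ⟨p, hp, rfl⟩ := h
  exact ⟨p, hp.trans hde, rfl⟩

lemma DegLE.add {x : σ → B} {d : ℕ} {u v : B} (hu : DegLE A x d u) (hv : DegLE A x d v) :
    DegLE A x d (u + v) := by
  obtain ⟨p, hp, rfl⟩ := hu
  obtain ⟨q, hq, rfl⟩ := hv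
  exact ⟨p + q, (totalDegree_add p q).trans (max_le hp hq), map_add _ _ _⟩

lemma DegLE.mul {x : σ → B} {d e : ℕ} {u v : B} (hu : DegLE A x d u) (hv : DegLE A x e v) :
    DegLE A x (d + e) (u * v) := by
  obtain ⟨p, hp, rfl⟩ := hu
  obtain ⟨q, hq, rfl⟩ := hv
  exact ⟨p * q, (totalDegree_mul p q).trans (add_le_add hp hq), map_mul _ _ _⟩

lemma DegLE.algebraMap (x : σ → B) (a : A) : DegLE A x 0 (algebraMap A B a) :=
  ⟨C a, by simp, by simp⟩

lemma DegLE.var [Nontrivial A] (x : σ → B) (i : σ) : DegLE A x 1 (x i) :=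
  ⟨X i, by simp, by simp⟩

lemma DegLE.neg {x : σ → B} {d : ℕ} {u : B} (hu : DegLE A x d u) : DegLE A x d (-u) := by
  obtain ⟨p, hp, rfl⟩ := hu
  exact ⟨-p, by simpa using hp, map_neg _ _⟩

lemma DegLE.sub {x : σ → B} {d : ℕ} {u v : B} (hu : DegLE A x d u) (hv : DegLE A x d v) :
    DegLE A x d (u - v) := by
  rw [sub_eq_add_neg]
  exact hu.add hv.neg

lemma DegLE.pow {x : σ → B} {d : ℕ} {u : B} (hu : DegLE A x d u) (k : ℕ) :
    DegLE A x (d * k) (u ^ k) := by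
  induction k with
  | zero => simpa using DegLE.algebraMap x (1 : A)
  | succ k ih => rw [pow_succ, Nat.mul_succ]; exact ih.mul hu

/-- Adding a term of degree `1` to an element `s` of degree `2` changes `s ^ (k + 1)` by a term of
degree less than `2 * (k + 1)`. -/
lemma DegLE.pow_add_sub {x : σ → B} {r s : B} (hr : DegLE A x 1 r) (hs : DegLE A x 2 s) (k : ℕ) :
    DegLE A x (2 * k + 1) ((r + s) ^ (k + 1) - s ^ (k + 1)) := by
  induction k with
  | zero => simpa using hr
  | succ k ih =>
    have h : (r + s) ^ (k + 1 + 1) - s ^ (k + 1 + 1) =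
        ((r + s) ^ (k + 1) - s ^ (k + 1)) * (r + s) + s ^ (k + 1) * r := by ring
    rw [h]
    exact ((ih.mul ((hr.mono one_le_two).add hs)).mono (by omega)).add
      (((hs.pow (k + 1)).mul hr).mono (by omega))

/-- If every `x i` has a power that is a polynomial in the `x j` of degree less than the exponent,
then the monomials with exponents bounded by these powers span the algebra generated by the
`x i`; in particular each `x i` is integral. -/
lemma isIntegral_of_pow_degLE [Finite σ] (x : σ → B)
    (h : ∀ i, ∃ m : ℕ, DegLE A x m (x i ^ (m + 1))) (i : σ) : IsIntegral A (x i) := by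
  classical
  have := Fintype.ofFinite σ
  choose m hm using h
  let mon : (σ →₀ ℕ) → B := fun e => aeval x (monomial e (1 : A))
  let T : Set (σ →₀ ℕ) := {e | ∀ i, e i ≤ m i}
  let M : Submodule A B := Submodule.span A (mon '' T)
  have hT : T.Finite :=
    (Set.finite_Iic (Finsupp.equivFunOnFinite.symm m)).subset fun e he => he
  have hpoly : ∀ p : MvPolynomial σ A, (∀ e ∈ p.support, mon e ∈ M) → aeval x p ∈ M := by
    intro p hp
    rw [p.as_sum, map_sum]
    refine Submodule.sum_mem _ fun e he => ?_
    have : aeval x (monomial e (p.coeff e)) = p.coeff e • mon e := by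
      simp only [mon, ← map_smul, smul_eq_mul, mul_one]
    rw [this]
    exact M.smul_mem _ (hp e he)
  have hmon : ∀ d : ℕ, ∀ e : σ →₀ ℕ, (e.sum fun _ k => k) = d → mon e ∈ M := by
    intro d
    induction d using Nat.strong_induction_on with
    | _ d ih =>
      intro e hed
      by_cases he : e ∈ T
      · exact Submodule.subset_span ⟨e, he, rfl⟩
      · simp only [T, Set.mem_ofPred_eq, not_forall, not_le] at he
        obtain ⟨j, hj⟩ := he
        obtain ⟨e', rfl⟩ : ∃ e', e = Finsupp.single j (m j + 1) + e' :=
          ⟨e - Finsupp.single j (m j + 1),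
            (add_tsub_cancel_of_le (Finsupp.single_le_iff.mpr hj)).symm⟩
        obtain ⟨p, hp, hpx⟩ := hm j
        have hsum : m j + 1 + (e'.sum fun _ k => k) = d := by
          rw [← hed, Finsupp.sum_add_index' (fun _ => rfl) (fun _ _ _ => rfl),
            Finsupp.sum_single_index rfl]
        have hkey : mon (Finsupp.single j (m j + 1) + e') = aeval x (p * monomial e' (1 : A)) := by
          rw [map_mul, hpx]
          simp only [mon]
          rw [← one_mul (1 : A), monomial_single_add, map_mul, map_pow, aeval_X, one_mul]
        rw [hkey]
        refine hpoly _ fun f hf => ih _ ?_ f rfl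
        have h1 := (le_totalDegree hf).trans (totalDegree_mul _ _)
        have h2 := totalDegree_monomial_le e' (1 : A)
        have h3 : (e'.sum fun _ ↦ id) = e'.sum fun _ k => k := rfl
        omega
  have hC : (aeval x : MvPolynomial σ A →ₐ[A] B).range.toSubmodule = M := by
    apply le_antisymm
    · rintro _ ⟨p, rfl⟩
      exact hpoly p fun e _ => hmon _ e rfl
    · rw [Submodule.span_le]
      rintro _ ⟨e, -, rfl⟩
      exact ⟨_, rfl⟩
  refine IsIntegral.of_mem_of_fg (aeval x : MvPolynomial σ A →ₐ[A] B).range ?_ _ ⟨X i, by simp⟩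
  rw [hC]
  exact Submodule.fg_span (hT.image _)

end DegLE

/-! ### The relations of the path -/

section Path

variable {A B : Type*} [CommRing A] [Nontrivial A] [CommRing B] [Algebra A B]

/-- Induction along the path: the step from `x_i` to `x_{i+1}` raises
`x_{i+1}^2 = r + x_i w` to the power that is already small for `x_i`. -/
lemma exists_pow_degLE {n : ℕ} (hn : 0 < n) (x y : Fin n → B)
    (hrel : ∀ (i : ℕ) (hi : i + 1 < n),
      x ⟨i, Nat.lt_of_succ_lt hi⟩ * y ⟨i + 1, hi⟩ = x ⟨i + 1, hi⟩ * y ⟨i, Nat.lt_of_succ_lt hi⟩)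
    (h0 : ∃ a : A, algebraMap A B a = x ⟨0, hn⟩)
    (hstep : ∀ (i : ℕ) (hi : i + 1 < n), ∃ a : A,
      algebraMap A B a = y ⟨i, Nat.lt_of_succ_lt hi⟩ - x ⟨i + 1, hi⟩)
    (hy : ∀ i, DegLE A x 1 (y i)) (i : ℕ) (hi : i < n) :
    ∃ m : ℕ, DegLE A x m (x ⟨i, hi⟩ ^ (m + 1)) := by
  induction i with
  | zero =>
    obtain ⟨a, ha⟩ := h0
    exact ⟨0, by rw [zero_add, pow_one, ← ha]; exact DegLE.algebraMap x a⟩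
  | succ i ih =>
    obtain ⟨m, hm⟩ := ih (by omega)
    obtain ⟨a, ha⟩ := hstep i hi
    set u := x ⟨i, Nat.lt_of_succ_lt hi⟩ with hu
    set v := x ⟨i + 1, hi⟩ with hv
    set w := y ⟨i + 1, hi⟩
    have hu1 : DegLE A x 1 u := DegLE.var x _
    have hv1 : DegLE A x 1 v := DegLE.var x _
    have hw1 : DegLE A x 1 w := hy _
    have hr : DegLE A x 1 (-(algebraMap A B a * v)) :=
      (((DegLE.algebraMap x a).mul hv1).mono (by omega)).neg
    have hsq : v ^ 2 = -(algebraMap A B a * v) + u * w := by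
      rw [ha]
      linear_combination -(hrel i hi)
    refine ⟨2 * m + 1, ?_⟩
    have hpow : v ^ (2 * m + 1 + 1) =
        ((-(algebraMap A B a * v) + u * w) ^ (m + 1) - (u * w) ^ (m + 1)) +
          u ^ (m + 1) * w ^ (m + 1) := by
      rw [← hsq]; ring
    rw [hpow]
    exact (hr.pow_add_sub (hu1.mul hw1) m).add ((hm.mul (hw1.pow (m + 1))).mono (by omega))

/-- If an algebra `B` over `A` is generated by elements `x_i, y_i` satisfying the relations of the
path, and the linear forms `x_1`, `y_i - x_{i+1}`, `y_n` come from `A`, then `B` is integral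
over `A`. -/
lemma path_isIntegral {K : Type*} [Field K] [Algebra K A] [Algebra K B] [IsScalarTower K A B]
    {n : ℕ} (hn : 0 < n) (φ : MvPolynomial (Fin n ⊕ Fin n) K →ₐ[K] B)
    (hφ : Function.Surjective φ)
    (hrel : ∀ (i : ℕ) (hi : i + 1 < n),
      φ (X (Sum.inl ⟨i, Nat.lt_of_succ_lt hi⟩)) * φ (X (Sum.inr ⟨i + 1, hi⟩)) =
        φ (X (Sum.inl ⟨i + 1, hi⟩)) * φ (X (Sum.inr ⟨i, Nat.lt_of_succ_lt hi⟩)))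
    (h0 : ∃ a : A, algebraMap A B a = φ (X (Sum.inl ⟨0, hn⟩)))
    (hstep : ∀ (i : ℕ) (hi : i + 1 < n), ∃ a : A,
      algebraMap A B a = φ (X (Sum.inr ⟨i, Nat.lt_of_succ_lt hi⟩)) - φ (X (Sum.inl ⟨i + 1, hi⟩)))
    (hlast : ∃ a : A, algebraMap A B a = φ (X (Sum.inr ⟨n - 1, by omega⟩))) :
    Algebra.IsIntegral A B := by
  let x : Fin n → B := fun i => φ (X (Sum.inl i))
  let y : Fin n → B := fun i => φ (X (Sum.inr i))
  have hyx : ∀ i : Fin n, (∃ a : A, algebraMap A B a = y i) ∨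
      ∃ (a : A) (j : Fin n), y i = algebraMap A B a + x j := by
    rintro ⟨i, hi⟩
    by_cases h : i + 1 < n
    · obtain ⟨a, ha⟩ := hstep i h
      exact Or.inr ⟨a, ⟨i + 1, h⟩, by rw [ha]; simp [x, y]⟩
    · obtain rfl : i = n - 1 := by omega
      exact Or.inl hlast
  have hy : ∀ i, DegLE A x 1 (y i) := by
    intro i
    rcases hyx i with ⟨a, ha⟩ | ⟨a, j, ha⟩
    · rw [← ha]; exact (DegLE.algebraMap x a).mono zero_le_one
    · rw [ha]; exact ((DegLE.algebraMap x a).mono zero_le_one).add (DegLE.var x j)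
  have hx_int : ∀ i, IsIntegral A (x i) :=
    isIntegral_of_pow_degLE x fun i => exists_pow_degLE hn x y hrel h0 hstep hy i i.2
  have hy_int : ∀ i, IsIntegral A (y i) := by
    intro i
    rcases hyx i with ⟨a, ha⟩ | ⟨a, j, ha⟩
    · rw [← ha]; exact isIntegral_algebraMap
    · rw [ha]; exact isIntegral_algebraMap.add (hx_int j)
  refine ⟨fun b => ?_⟩
  obtain ⟨f, rfl⟩ := hφ b
  induction f using MvPolynomial.induction_on with
  | C a =>
    rw [← algebraMap_eq, AlgHom.commutes, IsScalarTower.algebraMap_apply K A B]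
    exact isIntegral_algebraMap
  | add p q hp hq => rw [map_add]; exact hp.add hq
  | mul_X p i hp =>
    rw [map_mul]
    refine hp.mul ?_
    rcases i with i | i
    exacts [hx_int i, hy_int i]

end Path

/-! ### The lower bound -/

/-- The parametrization `x_i ↦ t_i`, `y_i ↦ t_i s`, where `t_i = X (some i)` and `s = X none`. -/
def param (K : Type) [Field K] (n : ℕ) :
    MvPolynomial (Fin n ⊕ Fin n) K →ₐ[K] MvPolynomial (Option (Fin n)) K :=
  aeval (Sum.elim (fun i => X (some i)) (fun i => X (some i) * X none))

lemma bei_le_ker_param (K : Type) [Field K] {n : ℕ} (G : SimpleGraph (Fin n)) :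
    bei K G ≤ RingHom.ker (param K n) := by
  rw [bei, Ideal.span_le]
  rintro _ ⟨i, j, -, -, rfl⟩
  simp only [SetLike.mem_coe, RingHom.mem_ker, param, xv, yv, map_sub, map_mul, aeval_X,
    Sum.elim_inl, Sum.elim_inr]
  ring

/-- The image of the parametrization has dimension at least `n + 1`: the specialization `t_1 = 1`
maps it onto a polynomial ring in `n` variables and kills `t_1 - 1`. -/
lemma le_ringKrullDim_range_param (K : Type) [Field K] {n : ℕ} (hn : 0 < n) :
    ((n + 1 : ℕ) : WithBot ℕ∞) ≤ ringKrullDim (param K n).range := by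
  let z : Fin n := ⟨0, hn⟩
  -- The variable `X z` of the target is free to serve as the image of `s`.
  let g : MvPolynomial (Option (Fin n)) K →ₐ[K] MvPolynomial (Fin n) K :=
    aeval (fun o => o.elim (X z) (fun i => if i = z then 1 else X i))
  let f : (param K n).range →ₐ[K] MvPolynomial (Fin n) K := g.comp (param K n).range.val
  have hfx : ∀ i, f ((param K n).rangeRestrict (X (Sum.inl i))) = if i = z then 1 else X i := by
    intro i
    change g (param K n (X (Sum.inl i))) = _
    rw [param, aeval_X]
    exact aeval_X _ _
  have hfy : f ((param K n).rangeRestrict (X (Sum.inr z))) = X z := by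
    change g (param K n (X (Sum.inr z))) = _
    rw [param, aeval_X]
    simp only [g, Sum.elim_inr, map_mul, aeval_X, Option.elim, if_true, one_mul]
  have hf : Function.Surjective f := by
    rw [← AlgHom.range_eq_top, eq_top_iff, ← adjoin_range_X, Algebra.adjoin_le_iff]
    rintro _ ⟨i, rfl⟩
    by_cases hi : i = z
    · exact ⟨_, hi ▸ hfy⟩
    · exact ⟨(param K n).rangeRestrict (X (Sum.inl i)), by
        simpa [hi] using hfx i⟩
  let r : (param K n).range := (param K n).rangeRestrict (X (Sum.inl z) - 1)
  have hr : r ∈ nonZeroDivisors (param K n).range := by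
    refine mem_nonZeroDivisors_of_ne_zero fun h => ?_
    have h1 : param K n (X (Sum.inl z) - 1) = 0 := congrArg Subtype.val h
    rw [map_sub, map_one, param, aeval_X] at h1
    have h2 := congrArg (aeval fun _ => (0 : K)) h1
    simp at h2
  have hr0 : f r = 0 := by
    simp only [r, map_sub, map_one, hfx, if_true, sub_self]
  have h := ringKrullDim_succ_le_of_surjective f.toRingHom hf hr hr0
  rw [MvPolynomial.ringKrullDim_of_isNoetherianRing, ringKrullDim_eq_zero_of_field] at h
  simpa using h

/-! ### The cycle -/

lemma xv_mul_yv_sub_mem_bei (K : Type) [Field K] {n i : ℕ} (hi : i + 1 < n) :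
    xv K (⟨i, Nat.lt_of_succ_lt hi⟩ : Fin n) * yv K ⟨i + 1, hi⟩ -
      xv K ⟨i + 1, hi⟩ * yv K ⟨i, Nat.lt_of_succ_lt hi⟩ ∈ bei K (cycleG n) :=
  Ideal.subset_span ⟨⟨i, Nat.lt_of_succ_lt hi⟩, ⟨i + 1, hi⟩, by simp, by simp [cycleG], rfl⟩

lemma mk_relation (K : Type) [Field K] {n : ℕ} {J : Ideal (MvPolynomial (Fin n ⊕ Fin n) K)}
    (hJ : bei K (cycleG n) ≤ J) (i : ℕ) (hi : i + 1 < n) :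
    Ideal.Quotient.mkₐ K J (X (Sum.inl ⟨i, Nat.lt_of_succ_lt hi⟩)) *
        Ideal.Quotient.mkₐ K J (X (Sum.inr ⟨i + 1, hi⟩)) =
      Ideal.Quotient.mkₐ K J (X (Sum.inl ⟨i + 1, hi⟩)) *
        Ideal.Quotient.mkₐ K J (X (Sum.inr ⟨i, Nat.lt_of_succ_lt hi⟩)) := by
  rw [← map_mul, ← map_mul]
  exact Ideal.Quotient.eq.mpr (hJ (xv_mul_yv_sub_mem_bei K hi))

lemma ringKrullDim_quotient_bei_le (K : Type) [Field K] {n : ℕ} (hn : 0 < n) :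
    ringKrullDim (MvPolynomial (Fin n ⊕ Fin n) K ⧸ bei K (cycleG n)) ≤ (n + 1 : ℕ) := by
  let φ := Ideal.Quotient.mkₐ K (bei K (cycleG n))
  -- The variable `none` maps to `x_1`, and `some j` to `y_j - x_{j+1}` or, for the last `j`, `y_j`.
  let L : Option (Fin n) → MvPolynomial (Fin n ⊕ Fin n) K ⧸ bei K (cycleG n) := fun o =>
    o.elim (φ (X (Sum.inl ⟨0, hn⟩))) fun j =>
      if h : (j : ℕ) + 1 < n then φ (X (Sum.inr j)) - φ (X (Sum.inl ⟨j + 1, h⟩))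
      else φ (X (Sum.inr j))
  let ψ : MvPolynomial (Option (Fin n)) K →ₐ[K] _ := aeval L
  let _ : Algebra (MvPolynomial (Option (Fin n)) K)
      (MvPolynomial (Fin n ⊕ Fin n) K ⧸ bei K (cycleG n)) := ψ.toRingHom.toAlgebra
  have : IsScalarTower K (MvPolynomial (Option (Fin n)) K)
      (MvPolynomial (Fin n ⊕ Fin n) K ⧸ bei K (cycleG n)) :=
    IsScalarTower.of_algebraMap_eq fun a => (ψ.commutes a).symm
  have hL : ∀ o, algebraMap (MvPolynomial (Option (Fin n)) K)
      (MvPolynomial (Fin n ⊕ Fin n) K ⧸ bei K (cycleG n)) (X o) = L o := fun o => aeval_X L o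
  have hint : Algebra.IsIntegral (MvPolynomial (Option (Fin n)) K)
      (MvPolynomial (Fin n ⊕ Fin n) K ⧸ bei K (cycleG n)) := by
    refine path_isIntegral (K := K) hn φ (Ideal.Quotient.mkₐ_surjective K _)
      (mk_relation K le_rfl) ⟨X none, hL none⟩ (fun i hi => ⟨X (some ⟨i, Nat.lt_of_succ_lt hi⟩), ?_⟩)
      ⟨X (some ⟨n - 1, by omega⟩), ?_⟩
    · rw [hL]; simp [L, hi]
    · rw [hL]; simp [L, Nat.sub_add_cancel hn]
  refine (ringKrullDim_le_of_integral (MvPolynomial (Option (Fin n)) K) _).trans ?_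
  rw [MvPolynomial.ringKrullDim_of_isNoetherianRing, ringKrullDim_eq_zero_of_field]
  simp

lemma le_ringKrullDim_quotient_bei (K : Type) [Field K] {n : ℕ} (hn : 0 < n)
    (G : SimpleGraph (Fin n)) :
    ((n + 1 : ℕ) : WithBot ℕ∞) ≤ ringKrullDim (MvPolynomial (Fin n ⊕ Fin n) K ⧸ bei K G) := by
  refine (le_ringKrullDim_range_param K hn).trans ?_
  refine ringKrullDim_le_of_surjective
    (Ideal.Quotient.lift (bei K G) (param K n).rangeRestrict.toRingHom fun a ha => ?_)
    (Ideal.Quotient.lift_surjective_of_surjective _ _ (param K n).rangeRestrict_surjective)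
  exact Subtype.ext (bei_le_ker_param K G ha)


/-- Let `C` be the cycle of length `n ≥ 3` on `[n]` and `I_C` its
binomial edge ideal.  Then the `n+1` linear forms
`x_1, y_1 − x_2, y_2 − x_3, …, y_{n−1} − x_n, y_n` form a homogeneous system of
parameters for `S/I_C`; that is, `dim(S/I_C) = n + 1` and the quotient of `S/I_C`
by the ideal generated by these `n+1` elements has Krull dimension `0`. -/
theorem statement7 (K : Type) [Field K] (n : ℕ) (hn : 3 ≤ n) :
    ringKrullDim (MvPolynomial (Fin n ⊕ Fin n) K ⧸ bei K (cycleG n)) = (n + 1 : ℕ) ∧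
    ringKrullDim (MvPolynomial (Fin n ⊕ Fin n) K ⧸
      (bei K (cycleG n) ⊔ Ideal.span
        ({xv K ⟨0, by omega⟩} ∪ {yv K ⟨n - 1, by omega⟩} ∪
          {f | ∃ (j : ℕ) (hj : j + 1 < n),
            f = yv K ⟨j, by omega⟩ - xv K ⟨j + 1, hj⟩}))) = (0 : ℕ) := by
  have hn0 : 0 < n := by omega
  refine ⟨le_antisymm (ringKrullDim_quotient_bei_le K hn0)
    (le_ringKrullDim_quotient_bei K hn0 _), ?_⟩
  set L : Set (MvPolynomial (Fin n ⊕ Fin n) K) :=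
    {xv K ⟨0, by omega⟩} ∪ {yv K ⟨n - 1, by omega⟩} ∪
      {f | ∃ (j : ℕ) (hj : j + 1 < n), f = yv K ⟨j, by omega⟩ - xv K ⟨j + 1, hj⟩} with hL
  set J := bei K (cycleG n) ⊔ Ideal.span L with hJ
  have hLJ : ∀ f ∈ L, Ideal.Quotient.mkₐ K J f = 0 := fun f hf =>
    Ideal.Quotient.eq_zero_iff_mem.mpr (le_sup_right (a := bei K (cycleG n))
      (Ideal.subset_span hf))
  have hint : Algebra.IsIntegral K (MvPolynomial (Fin n ⊕ Fin n) K ⧸ J) := by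
    refine path_isIntegral (K := K) hn0 (Ideal.Quotient.mkₐ K J)
      (Ideal.Quotient.mkₐ_surjective K _) (mk_relation K le_sup_left) ⟨0, ?_⟩
      (fun i hi => ⟨0, ?_⟩) ⟨0, ?_⟩
    · rw [map_zero]; exact (hLJ _ (Or.inl (Or.inl rfl))).symm
    · rw [map_zero, ← map_sub]; exact (hLJ _ (Or.inr ⟨i, hi, rfl⟩)).symm
    · rw [map_zero]; exact (hLJ _ (Or.inl (Or.inr rfl))).symm
  -- All generators vanish at the origin, so the quotient is not the zero ring.
  have hne : J ≠ ⊤ := by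
    have hle : J ≤ RingHom.ker (aeval (fun _ => (0 : K)) :
        MvPolynomial (Fin n ⊕ Fin n) K →ₐ[K] K) := by
      refine sup_le (Ideal.span_le.mpr ?_) (Ideal.span_le.mpr ?_)
      · rintro _ ⟨i, j, -, -, rfl⟩
        simp [xv, yv]
      · rintro _ ((rfl | rfl) | ⟨j, hj, rfl⟩) <;> simp [xv, yv]
    intro h
    exact RingHom.ker_ne_top _ (top_le_iff.mp (h ▸ hle))
  have := Ideal.Quotient.nontrivial_iff.mpr hne
  refine le_antisymm ?_ (by simpa using ringKrullDim_nonneg_of_nontrivial)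
  refine (ringKrullDim_le_of_integral K _).trans ?_
  rw [ringKrullDim_eq_zero_of_field]
  simp

end BEIPaper
end
end
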